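/- arXiv:0807.2080 — 12 statements merged into one kernel-verified Lean document; each statement's English description precedes it below -/
import Mathlib

section
/- For all n ≥ 1 and all u = (z,x), v = (z',x') in V = (Fin n → ZMod 2) × (Fin n → ZMod 2), one has N_u * N_v = (−1)^{s} • N_{u+v}, where s ∈ {0,1} is the representative of ∑ i, x i * z' i ∈ ZMod 2. In particular the map u ↦ N_u is, up to sign, a homomorphism from the additive group V to the multiplicative group of 2^n × 2^n matrices. -/
/-!
Tensor products multiply factorwise, so everything happens on single qubits. There `X Z = -Z X` and
`X² = Z² = 1`: moving `Z ^ z'` to the left past `X ^ x` costs the sign `(-1) ^ (x z')`, and all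
exponents matter only modulo `2`. The signs of the `n` qubits multiply to `(-1) ^ ∑ i, x i * z' i`
because `a ↦ (-1) ^ a.val` is a character of `ZMod 2`.
-/

/-- The phase space `(ℤ₂)ⁿ × (ℤ₂)ⁿ` of `n`-qubit Pauli labels. -/
abbrev V (n : ℕ) : Type := (Fin n → ZMod 2) × (Fin n → ZMod 2)

/-- The single-qubit Pauli `X` matrix. -/
noncomputable def PauliX : Matrix (Fin 2) (Fin 2) ℂ := !![0, 1; 1, 0]

/-- The single-qubit Pauli `Z` matrix. -/
noncomputable def PauliZ : Matrix (Fin 2) (Fin 2) ℂ := !![1, 0; 0, -1]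

/-- The `n`-fold tensor (Kronecker) product of a family of `2 × 2` matrices,
realized as a matrix indexed by `Fin n → Fin 2` (a `2ⁿ × 2ⁿ` matrix). -/
noncomputable def tensorPow {n : ℕ} (M : Fin n → Matrix (Fin 2) (Fin 2) ℂ) :
    Matrix (Fin n → Fin 2) (Fin n → Fin 2) ℂ :=
  Matrix.of fun f g => ∏ i, M i (f i) (g i)

/-- The `n`-qubit Pauli matrix `N_{(z,x)} = (⨂ᵢ Z^{zᵢ}) * (⨂ᵢ X^{xᵢ})`. -/
noncomputable def NPauli {n : ℕ} (u : V n) :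
    Matrix (Fin n → Fin 2) (Fin n → Fin 2) ℂ :=
  tensorPow (fun i => PauliZ ^ (u.1 i).val) * tensorPow (fun i => PauliX ^ (u.2 i).val)

section Weyl

theorem pow_val_add_of_pow_eq_one {M : Type*} [Monoid M] {d : ℕ} [NeZero d] {a : M}
    (ha : a ^ d = 1) (j k : ZMod d) : a ^ (j + k).val = a ^ j.val * a ^ k.val := by
  rw [ZMod.val_add, ← pow_eq_pow_mod _ ha, pow_add]

theorem pow_val_sum_of_pow_eq_one {M ι : Type*} [CommMonoid M] {d : ℕ} [NeZero d] {a : M}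
    (ha : a ^ d = 1) (s : Finset ι) (k : ι → ZMod d) :
    a ^ (∑ i ∈ s, k i).val = ∏ i ∈ s, a ^ (k i).val :=
  map_prod (AddChar.zmodChar d ha).toMonoidHom (fun i => Multiplicative.ofAdd (k i)) s

theorem pow_val_mul_of_pow_eq_one {M : Type*} [Monoid M] {d : ℕ} {a : M}
    (ha : a ^ d = 1) (j k : ZMod d) : a ^ (j * k).val = a ^ (j.val * k.val) := by
  rw [ZMod.val_mul, ← pow_eq_pow_mod _ ha]

variable {R A : Type*} [Monoid R] [Monoid A] [MulAction R A] [IsScalarTower R A A]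
  [SMulCommClass R A A] {ζ : R} {a b : A}

theorem pow_mul_pow_of_mul_eq_smul (h : a * b = ζ • (b * a)) (j k : ℕ) :
    a ^ j * b ^ k = ζ ^ (j * k) • (b ^ k * a ^ j) := by
  have a_semiconj : SemiconjBy a (b ^ k) (ζ ^ k • b ^ k) := by
    rw [← smul_pow]
    exact SemiconjBy.pow_right (by rw [SemiconjBy, h, smul_mul_assoc]) k
  have b_semiconj : SemiconjBy (b ^ k) (ζ ^ k • a) a := by
    rw [SemiconjBy, mul_smul_comm, ← smul_mul_assoc, a_semiconj.eq]
  rw [← (b_semiconj.pow_right j).eq, smul_pow, ← pow_mul', mul_smul_comm]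

/-- For qudits, `b` and `a` are the clock and shift matrices and `ζ` is a primitive `d`-th root of
unity. -/
theorem weyl_mul {d : ℕ} [NeZero d] (h : a * b = ζ • (b * a)) (hζ : ζ ^ d = 1)
    (ha : a ^ d = 1) (hb : b ^ d = 1) (z x z' x' : ZMod d) :
    (b ^ z.val * a ^ x.val) * (b ^ z'.val * a ^ x'.val) =
      ζ ^ (x * z').val • (b ^ (z + z').val * a ^ (x + x').val) :=
  calc (b ^ z.val * a ^ x.val) * (b ^ z'.val * a ^ x'.val)
      = b ^ z.val * (a ^ x.val * b ^ z'.val) * a ^ x'.val := by simp only [mul_assoc]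
    _ = ζ ^ (x * z').val • ((b ^ z.val * b ^ z'.val) * (a ^ x.val * a ^ x'.val)) := by
      rw [pow_mul_pow_of_mul_eq_smul h, ← pow_val_mul_of_pow_eq_one hζ]
      simp only [mul_smul_comm, smul_mul_assoc, mul_assoc]
    _ = ζ ^ (x * z').val • (b ^ (z + z').val * a ^ (x + x').val) := by
      rw [← pow_val_add_of_pow_eq_one hb, ← pow_val_add_of_pow_eq_one ha]

end Weyl

section Pauli

theorem pauliX_sq : PauliX ^ 2 = 1 := by
  simp [sq, PauliX, Matrix.one_fin_two]

theorem pauliZ_sq : PauliZ ^ 2 = 1 := by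
  simp [sq, PauliZ, Matrix.one_fin_two]

theorem pauliX_mul_pauliZ : PauliX * PauliZ = (-1 : ℂ) • (PauliZ * PauliX) := by
  simp [PauliX, PauliZ]

variable {n : ℕ}

theorem tensorPow_mul_tensorPow (A B : Fin n → Matrix (Fin 2) (Fin 2) ℂ) :
    tensorPow A * tensorPow B = tensorPow fun i => A i * B i := by
  ext f g
  simp only [tensorPow, Matrix.mul_apply, Matrix.of_apply, ← Finset.prod_mul_distrib,
    Fintype.prod_sum]

theorem tensorPow_smul (c : Fin n → ℂ) (A : Fin n → Matrix (Fin 2) (Fin 2) ℂ) :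
    tensorPow (fun i => c i • A i) = (∏ i, c i) • tensorPow A := by
  ext f g
  simp only [tensorPow, Matrix.of_apply, Matrix.smul_apply, smul_eq_mul, Finset.prod_mul_distrib]

theorem nPauli_eq_tensorPow (u : V n) :
    NPauli u = tensorPow fun i => PauliZ ^ (u.1 i).val * PauliX ^ (u.2 i).val :=
  tensorPow_mul_tensorPow _ _

end Pauli

/-- The map `u ↦ N_u` is a homomorphism up to sign:
`N_u N_v = (−1)^{∑ i, x_i z'_i} N_{u+v}` for `u = (z,x)` and `v = (z',x')`. -/
theorem pauli_mul (n : ℕ) (hn : 1 ≤ n) (u v : V n) :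
    NPauli u * NPauli v =
      ((-1 : ℂ) ^ (∑ i, u.2 i * v.1 i : ZMod 2).val) • NPauli (u + v) := by
  have qubit_mul (i : Fin n) := weyl_mul pauliX_mul_pauliZ neg_one_sq pauliX_sq pauliZ_sq
    (u.1 i) (u.2 i) (v.1 i) (v.2 i)
  calc NPauli u * NPauli v
      = tensorPow fun i => (-1 : ℂ) ^ (u.2 i * v.1 i).val •
          (PauliZ ^ (u.1 i + v.1 i).val * PauliX ^ (u.2 i + v.2 i).val) := by
        simp only [nPauli_eq_tensorPow, tensorPow_mul_tensorPow, qubit_mul]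
    _ = (∏ i, (-1 : ℂ) ^ (u.2 i * v.1 i).val) • NPauli (u + v) := by
        rw [tensorPow_smul, nPauli_eq_tensorPow]
        rfl
    _ = (-1 : ℂ) ^ (∑ i, u.2 i * v.1 i).val • NPauli (u + v) := by
        rw [pow_val_sum_of_pow_eq_one neg_one_sq]
end

section
/- Let F₄ := GaloisField 2 2 and fix ω ∈ F₄ with ω² + ω + 1 = 0. Let H : Matrix (Fin m) (Fin n) F₄ and d ≥ 1. Assume that for every nonzero a : Fin n → F₄ with #{i : a i ≠ 0} < d there exists a row index j with ∑ i, (H j i)² * a i ≠ 0. Then for every nonzero pair (z,x) ∈ (Fin n → ZMod 2) × (Fin n → ZMod 2) with #{i : z i ≠ 0 ∨ x i ≠ 0} < d, there exist a row index j and e ∈ {ω, ω²} such that ∑ i, (γ₁(e * H j i) * x i + z i * γ₂(e * H j i)) ≠ 0 in ZMod 2. (That is, a classical [n,k,d] quaternary code yields an [n,2k−n,d] symplectic code whose parity check matrix has rows γ(ω·h_j) and γ(ω²·h_j).) -/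
/-!
Let `Tr` be the trace from `𝔽₄` to `𝔽₂`. Since `Tr 1 = 0` and `Tr ω = Tr ω² = 1`, expanding
`(p ω + q ω²)² (z ω + x ω²) = (q ω + p ω²) (z ω + x ω²)` shows that the symplectic product of
`(p, q)` and `(z, x)` is the trace of the Hermitian product of `γ⁻¹ (p, q)` and `γ⁻¹ (z, x)`.
Hence, if `a = γ⁻¹ (z, x)` has Hermitian syndrome `u = ∑ i, h i ^ 2 * a i ≠ 0` against a row `h`,
then the symplectic products of `(z, x)` with `γ (ω h)` and `γ (ω² h)` are `Tr (ω² u)` and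
`Tr (ω⁴ u)`, which are the two coordinates of `u` in the basis `{ω², ω}` and cannot both vanish.
-/

lemma algebraMap_trace_eq_add_pow_card {F K : Type*} [Field F] [Field K] [Finite F] [Algebra F K]
    [Algebra.IsQuadraticExtension F K] (b : K) :
    algebraMap F K (Algebra.trace F K b) = b + b ^ Nat.card F := by
  have : Finite K := Module.finite_of_finite F
  rw [FiniteField.algebraMap_trace_eq_sum_pow, Algebra.IsQuadraticExtension.finrank_eq_two]
  simp [Finset.sum_range_succ]

lemma trace_one_of_isQuadraticExtension {F K : Type*} [Field F] [Field K] [Algebra F K]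
    [Algebra.IsQuadraticExtension F K] : Algebra.trace F K 1 = 2 := by
  rw [← map_one (algebraMap F K), Algebra.trace_algebraMap,
    Algebra.IsQuadraticExtension.finrank_eq_two, two_nsmul, one_add_one_eq_two]

lemma zmod_val_nsmul_eq_smul {n : ℕ} [NeZero n] {M : Type*} [AddCommMonoid M] [Module (ZMod n) M]
    (c : ZMod n) (b : M) : c.val • b = c • b := by
  rw [← Nat.cast_smul_eq_nsmul (ZMod n), ZMod.natCast_zmod_val]

/-- The inverse `(p, q) ↦ p ω + q ω²` of the paper's `γ`, for an arbitrary element `ω` of an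
algebra over `ℤ₂`. -/
def gammaInv {K : Type*} [Ring K] [Algebra (ZMod 2) K] (ω : K) : ZMod 2 × ZMod 2 →ₗ[ZMod 2] K :=
  (LinearMap.toSpanSingleton (ZMod 2) K ω).coprod (LinearMap.toSpanSingleton (ZMod 2) K (ω ^ 2))

lemma gammaInv_apply {K : Type*} [Ring K] [Algebra (ZMod 2) K] (ω : K) (p q : ZMod 2) :
    gammaInv ω (p, q) = p • ω + q • ω ^ 2 := rfl

lemma two_eq_zero_of_zmod_two_algebra (K : Type*) [Ring K] [Algebra (ZMod 2) K] : (2 : K) = 0 :=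
  calc (2 : K) = algebraMap (ZMod 2) K 2 := (map_ofNat _ 2).symm
    _ = algebraMap (ZMod 2) K 0 := congrArg _ CharTwo.two_eq_zero
    _ = 0 := map_zero _

lemma omega_pow_three_eq_one {R : Type*} [Ring R] {ω : R} (hω : ω ^ 2 + ω + 1 = 0) : ω ^ 3 = 1 := by
  rw [← sub_eq_zero]
  calc ω ^ 3 - 1 = (ω - 1) * (ω ^ 2 + ω + 1) := by noncomm_ring
    _ = 0 := by rw [hω, mul_zero]

section CommRing

variable {K : Type*} [CommRing K] [Algebra (ZMod 2) K] {ω : K}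

lemma omega_sq_eq_omega_add_one (hω : ω ^ 2 + ω + 1 = 0) : ω ^ 2 = ω + 1 := by
  linear_combination hω - (ω + 1) * two_eq_zero_of_zmod_two_algebra K

lemma gammaInv_sq (hω : ω ^ 2 + ω + 1 = 0) (p q : ZMod 2) :
    gammaInv ω (p, q) ^ 2 = gammaInv ω (q, p) := by
  have ω_pow_four : (ω ^ 2) ^ 2 = ω := by linear_combination ω * omega_pow_three_eq_one hω
  calc gammaInv ω (p, q) ^ 2
    _ = (p • ω) ^ 2 + (q • ω ^ 2) ^ 2 := by
      rw [gammaInv_apply, add_sq, two_eq_zero_of_zmod_two_algebra, zero_mul, zero_mul, add_zero]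
    _ = gammaInv ω (q, p) := by
      simp only [gammaInv_apply, smul_pow, ZMod.pow_card, ω_pow_four, add_comm]

lemma gammaInv_mul_gammaInv (hω : ω ^ 2 + ω + 1 = 0) (p q z x : ZMod 2) :
    gammaInv ω (p, q) * gammaInv ω (z, x) =
      (p * z) • ω ^ 2 + (p * x + q * z) • (1 : K) + (q * x) • ω := by
  simp only [gammaInv_apply, Algebra.smul_def, map_add, map_mul]
  linear_combination (algebraMap _ K p * algebraMap _ K x + algebraMap _ K q * algebraMap _ K z +
    algebraMap _ K q * algebraMap _ K x * ω) * omega_pow_three_eq_one hω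

end CommRing

section QuadraticExtension

variable {K : Type*} [Field K] [Algebra (ZMod 2) K] [Algebra.IsQuadraticExtension (ZMod 2) K]
  {ω : K}

lemma trace_omega_eq_one (hω : ω ^ 2 + ω + 1 = 0) : Algebra.trace (ZMod 2) K ω = 1 := by
  apply (algebraMap (ZMod 2) K).injective
  rw [algebraMap_trace_eq_add_pow_card, Nat.card_zmod, omega_sq_eq_omega_add_one hω, map_one]
  linear_combination ω * two_eq_zero_of_zmod_two_algebra K

lemma trace_omega_sq_eq_one (hω : ω ^ 2 + ω + 1 = 0) : Algebra.trace (ZMod 2) K (ω ^ 2) = 1 := by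
  simp only [omega_sq_eq_omega_add_one hω, map_add, trace_omega_eq_one hω,
    trace_one_of_isQuadraticExtension, CharTwo.two_eq_zero, add_zero]

lemma trace_gammaInv_sq_mul_gammaInv (hω : ω ^ 2 + ω + 1 = 0) (p q z x : ZMod 2) :
    Algebra.trace (ZMod 2) K (gammaInv ω (p, q) ^ 2 * gammaInv ω (z, x)) = p * x + z * q := by
  simp only [gammaInv_sq hω, gammaInv_mul_gammaInv hω, map_add, map_smul, smul_eq_mul,
    trace_one_of_isQuadraticExtension, CharTwo.two_eq_zero, trace_omega_eq_one hω,
    trace_omega_sq_eq_one hω]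
  ring

lemma sum_symplectic_eq_trace_sum (hω : ω ^ 2 + ω + 1 = 0) {ι : Type*} [Fintype ι]
    (p q z x : ι → ZMod 2) :
    ∑ i, (p i * x i + z i * q i) =
      Algebra.trace (ZMod 2) K (∑ i, gammaInv ω (p i, q i) ^ 2 * gammaInv ω (z i, x i)) := by
  simp only [map_sum, trace_gammaInv_sq_mul_gammaInv hω]

lemma trace_omega_sq_mul_gammaInv (hω : ω ^ 2 + ω + 1 = 0) (z x : ZMod 2) :
    Algebra.trace (ZMod 2) K (ω ^ 2 * gammaInv ω (z, x)) = x := by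
  simpa [gammaInv_apply] using trace_gammaInv_sq_mul_gammaInv hω 1 0 z x

lemma trace_omega_sq_sq_mul_gammaInv (hω : ω ^ 2 + ω + 1 = 0) (z x : ZMod 2) :
    Algebra.trace (ZMod 2) K ((ω ^ 2) ^ 2 * gammaInv ω (z, x)) = z := by
  simpa [gammaInv_apply] using trace_gammaInv_sq_mul_gammaInv hω 0 1 z x

lemma gammaInv_injective (hω : ω ^ 2 + ω + 1 = 0) : Function.Injective (gammaInv ω) := by
  rintro ⟨z, x⟩ ⟨z', x'⟩ h
  ext
  · rw [← trace_omega_sq_sq_mul_gammaInv hω z x, h, trace_omega_sq_sq_mul_gammaInv hω]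
  · rw [← trace_omega_sq_mul_gammaInv hω z x, h, trace_omega_sq_mul_gammaInv hω]

lemma gammaInv_surjective (hω : ω ^ 2 + ω + 1 = 0) : Function.Surjective (gammaInv ω) := by
  have finrank_eq : Module.finrank (ZMod 2) (ZMod 2 × ZMod 2) = Module.finrank (ZMod 2) K := by
    rw [Module.finrank_prod, Module.finrank_self, Algebra.IsQuadraticExtension.finrank_eq_two]
  exact (LinearMap.injective_iff_surjective_of_finrank_eq_finrank finrank_eq).1
    (gammaInv_injective hω)

lemma gammaInv_ne_zero_iff (hω : ω ^ 2 + ω + 1 = 0) (z x : ZMod 2) :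
    gammaInv ω (z, x) ≠ 0 ↔ z ≠ 0 ∨ x ≠ 0 := by
  rw [map_ne_zero_iff _ (gammaInv_injective hω), Ne, Prod.mk_eq_zero, not_and_or]

lemma exists_trace_sq_mul_ne_zero (hω : ω ^ 2 + ω + 1 = 0) {u : K} (hu : u ≠ 0) :
    ∃ e ∈ ({ω, ω ^ 2} : Set K), Algebra.trace (ZMod 2) K (e ^ 2 * u) ≠ 0 := by
  obtain ⟨⟨z, x⟩, rfl⟩ := gammaInv_surjective hω u
  rcases (gammaInv_ne_zero_iff hω z x).1 hu with hz | hx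
  · exact ⟨ω ^ 2, by simp, by rwa [trace_omega_sq_sq_mul_gammaInv hω]⟩
  · exact ⟨ω, by simp, by rwa [trace_omega_sq_mul_gammaInv hω]⟩

end QuadraticExtension

/-- A classical `[n,k,d]` quaternary code (given by a parity check matrix `H` over
`𝔽₄ = GaloisField 2 2`, with distance `d` expressed via the Hermitian inner product
`∑ i, (H j i)² * a i`) yields an `[n,2k−n,d]` symplectic code: the parity check matrix
with rows `γ(ω·h_j)` and `γ(ω²·h_j)` detects (w.r.t. the symplectic product) every
nonzero binary pair `(z,x)` of symplectic weight less than `d`.  Here `γ = (γ₁, γ₂)`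
is the decomposition of `𝔽₄` in the `ℤ₂`-basis `{ω, ω²}`, where `ω² + ω + 1 = 0`. -/
theorem quaternary_to_symplectic (m n d : ℕ) (hd : 1 ≤ d)
    (ω : GaloisField 2 2) (hω : ω ^ 2 + ω + 1 = 0)
    (γ₁ γ₂ : GaloisField 2 2 → ZMod 2)
    (hγ : ∀ b : GaloisField 2 2, b = (γ₁ b).val • ω + (γ₂ b).val • ω ^ 2)
    (H : Matrix (Fin m) (Fin n) (GaloisField 2 2))
    (hH : ∀ a : Fin n → GaloisField 2 2, a ≠ 0 →
      ({i | a i ≠ 0} : Set (Fin n)).ncard < d →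
      ∃ j, ∑ i, (H j i) ^ 2 * a i ≠ 0) :
    ∀ z x : Fin n → ZMod 2, (z, x) ≠ (0, 0) →
      ({i | z i ≠ 0 ∨ x i ≠ 0} : Set (Fin n)).ncard < d →
      ∃ j, ∃ e ∈ ({ω, ω ^ 2} : Set (GaloisField 2 2)),
        ∑ i, (γ₁ (e * H j i) * x i + z i * γ₂ (e * H j i)) ≠ 0 := by
  have : Algebra.IsQuadraticExtension (ZMod 2) (GaloisField 2 2) :=
    ⟨GaloisField.finrank 2 two_ne_zero⟩
  have gammaInv_gamma (b) : gammaInv ω (γ₁ b, γ₂ b) = b := by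
    rw [gammaInv_apply, ← zmod_val_nsmul_eq_smul, ← zmod_val_nsmul_eq_smul, ← hγ]
  intro z x hzx hweight
  let a i := gammaInv ω (z i, x i)
  have ha : a ≠ 0 := by
    intro h
    have coords_eq_zero (i : Fin n) : (z i, x i) = 0 :=
      (map_eq_zero_iff _ (gammaInv_injective hω)).1 (congrFun h i)
    exact hzx (Prod.ext (funext fun i ↦ congrArg Prod.fst (coords_eq_zero i))
      (funext fun i ↦ congrArg Prod.snd (coords_eq_zero i)))
  obtain ⟨j, hj⟩ := hH a ha (by simpa only [a, gammaInv_ne_zero_iff hω] using hweight)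
  obtain ⟨e, he, htrace⟩ := exists_trace_sq_mul_ne_zero hω hj
  refine ⟨j, e, he, ?_⟩
  rw [sum_symplectic_eq_trace_sum hω (fun i ↦ γ₁ (e * H j i)) (fun i ↦ γ₂ (e * H j i))]
  simpa only [gammaInv_gamma, mul_pow, mul_assoc, ← Finset.mul_sum] using htrace
end

section
/- Let H : Matrix (Fin m) (Fin n) (ZMod 2) and let W be the ZMod 2-subspace of V = (Fin n → ZMod 2) × (Fin n → ZMod 2) spanned by the 2m vectors (H j, 0) and (0, H j) for j ∈ Fin m (where H j denotes the j-th row of H). Then finrank W − finrank rad(W) = 2 * (H * Hᵀ).rank, where rad(W) := {w ∈ W : ∀ u ∈ W, ⟨w,u⟩ = 0}. (In the entanglement-assisted CSS construction from H, the number of ebits needed is c = rank(H Hᵀ).) -/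
/-!
Let `W` be spanned by vectors `v i` and let `B` be a bilinear form. The map `w ↦ (B (v i) w)ᵢ` has
kernel `Wᗮ` and sends `W` onto the column space of the Gram matrix of `v`, so by rank–nullity
`dim W - dim (W ⊓ Wᗮ)` is the rank of the Gram matrix. For the symplectic form and the CSS
generators `(A i, 0)` and `(0, B j)`, the generators of each kind are orthogonal to each other, so
the Gram matrix consists of the off-diagonal blocks `A * Bᵀ` and `-(A * Bᵀ)ᵀ`.
-/

open Matrix

/-- The symplectic product `⟨(z,x),(z',x')⟩ = ∑ i, (z i * x' i + z' i * x i)`. -/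
def sp {n : ℕ} (u v : V n) : ZMod 2 :=
  ∑ i, (u.1 i * v.2 i + v.1 i * u.2 i)

lemma sp_add_left {n : ℕ} (a b u : V n) : sp (a + b) u = sp a u + sp b u := by
  simp only [sp, ← Finset.sum_add_distrib]
  refine Finset.sum_congr rfl fun i _ => ?_
  simp only [Prod.fst_add, Prod.snd_add, Pi.add_apply]
  ring

lemma sp_zero_left {n : ℕ} (u : V n) : sp (0 : V n) u = 0 := by
  simp [sp]

/-- The symplectic orthogonal complement `{v | ∀ u ∈ W, ⟨v,u⟩ = 0}` of a subspace `W`. -/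
def sOrth {n : ℕ} (W : Submodule (ZMod 2) (V n)) : Submodule (ZMod 2) (V n) where
  carrier := {v | ∀ u ∈ W, sp v u = 0}
  zero_mem' := by
    intro u hu
    exact sp_zero_left u
  add_mem' := by
    intro a b ha hb u hu
    rw [sp_add_left, ha u hu, hb u hu, add_zero]
  smul_mem' := by
    intro c a ha
    rcases (show ∀ x : ZMod 2, x = 0 ∨ x = 1 by decide) c with h | h
    · subst h
      intro u hu
      rw [zero_smul]
      exact sp_zero_left u
    · subst h
      intro u hu
      rw [one_smul]
      exact ha u hu

open Module

section Finrank

variable {K V₁ V₂ : Type*} [DivisionRing K] [AddCommGroup V₁] [Module K V₁] [AddCommGroup V₂]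
  [Module K V₂]

theorem finrank_map_add_finrank_inf_ker (f : V₁ →ₗ[K] V₂) (S : Submodule K V₁)
    [FiniteDimensional K S] :
    finrank K (S.map f) + finrank K ↥(S ⊓ LinearMap.ker f) = finrank K S := by
  have hker : finrank K (LinearMap.ker (f.domRestrict S)) = finrank K ↥(S ⊓ LinearMap.ker f) := by
    rw [LinearMap.ker_domRestrict, ← Submodule.map_comap_subtype, Submodule.finrank_map_subtype_eq]
  rw [← LinearMap.range_domRestrict, ← hker, LinearMap.finrank_range_add_finrank_ker]

theorem finrank_submodule_prod (S : Submodule K V₁) (T : Submodule K V₂) [FiniteDimensional K S]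
    [FiniteDimensional K T] : finrank K (S.prod T) = finrank K S + finrank K T := by
  have hrange : LinearMap.range (S.subtype.prodMap T.subtype) = S.prod T := by
    rw [LinearMap.range_prodMap, Submodule.range_subtype, Submodule.range_subtype]
  rw [← hrange, ← finrank_prod]
  exact LinearMap.finrank_range_of_inj (S.injective_subtype.prodMap T.injective_subtype)

end Finrank

section BlockRank

variable {K l m n o : Type*} [Field K] [Fintype m] [Fintype n]

theorem rank_fromBlocks_diagonal (A : Matrix l m K) (D : Matrix o n K) :
    (fromBlocks A 0 0 D).rank = A.rank + D.rank := by
  have hmulVec : (fromBlocks A 0 0 D).mulVecLin =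
      (LinearEquiv.sumArrowLequivProdArrow l o K K).symm ∘ₗ
        A.mulVecLin.prodMap D.mulVecLin ∘ₗ LinearEquiv.sumArrowLequivProdArrow m n K K := by
    refine LinearMap.ext fun v => ?_
    rw [mulVecLin_apply, fromBlocks_mulVec, zero_mulVec, zero_mulVec, add_zero, zero_add]
    rfl
  rw [rank, hmulVec, LinearMap.range_comp, LinearEquiv.range_comp, LinearEquiv.finrank_map_eq,
    LinearMap.range_prodMap, finrank_submodule_prod, rank, rank]

theorem rank_fromBlocks_antidiagonal (B : Matrix l n K) (C : Matrix o m K) :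
    (fromBlocks 0 B C 0).rank = B.rank + C.rank := by
  have hswap : (fromBlocks B 0 0 C).submatrix id Sum.swap = fromBlocks 0 B C 0 := by simp
  rw [← rank_fromBlocks_diagonal, ← hswap]
  exact rank_submatrix _ (Equiv.refl _) (Equiv.sumComm _ _)

end BlockRank

section GramMatrix

variable {R M N ι κ : Type*} [CommSemiring R] [AddCommMonoid M] [Module R M] [AddCommMonoid N]
  [Module R N]

/-- The matrix of pairings `B (u i) (v j)` of two families of vectors under a bilinear pairing;
for `u = v` this is the Gram matrix of `v`. -/
def gramMatrix (B : M →ₗ[R] N →ₗ[R] R) (u : ι → M) (v : κ → N) : Matrix ι κ R :=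
  of fun i j => B (u i) (v j)

theorem orthogonalBilin_span_range (B : M →ₗ[R] N →ₗ[R] R) (u : ι → M) :
    (Submodule.span R (Set.range u)).orthogonalBilin B =
      LinearMap.ker (LinearMap.pi fun i => B (u i)) := by
  ext w
  have hspan : (∀ x ∈ Submodule.span R (Set.range u), B x w = 0) ↔
      Submodule.span R (Set.range u) ≤ LinearMap.ker (B.flip w) := Iff.rfl
  rw [Submodule.mem_orthogonalBilin_iff, hspan, Submodule.span_le, Set.range_subset_iff]
  simp [funext_iff]

theorem finrank_map_pi_span_range [Fintype κ] (B : M →ₗ[R] N →ₗ[R] R) (u : ι → M) (v : κ → N) :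
    finrank R ((Submodule.span R (Set.range v)).map (LinearMap.pi fun i => B (u i))) =
      (gramMatrix B u v).rank := by
  have hcol : (gramMatrix B u v).col = (LinearMap.pi fun i => B (u i)) ∘ v := rfl
  rw [rank_eq_finrank_span_cols, hcol, Set.range_comp, Submodule.map_span]

theorem rank_gramMatrix_add_finrank_inf_orthogonalBilin {K V₁ V₂ : Type*} [Field K]
    [AddCommGroup V₁] [Module K V₁] [AddCommGroup V₂] [Module K V₂] [Fintype κ]
    (B : V₁ →ₗ[K] V₂ →ₗ[K] K) (u : ι → V₁) (v : κ → V₂) :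
    (gramMatrix B u v).rank + finrank K ↥(Submodule.span K (Set.range v) ⊓
        (Submodule.span K (Set.range u)).orthogonalBilin B) =
      finrank K (Submodule.span K (Set.range v)) := by
  have : FiniteDimensional K (Submodule.span K (Set.range v)) :=
    FiniteDimensional.span_of_finite K (Set.finite_range v)
  rw [orthogonalBilin_span_range, ← finrank_map_pi_span_range, finrank_map_add_finrank_inf_ker]

end GramMatrix

section Symplectic

/-- The standard symplectic form `⟨(z, x), (z', x')⟩ = z ⬝ᵥ x' - x ⬝ᵥ z'`. Over `ZMod 2` the sign is
invisible and this is `sp`; elsewhere it makes the form alternating. -/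
def symplecticForm (K n : Type*) [CommRing K] [Fintype n] :
    LinearMap.BilinForm K ((n → K) × (n → K)) :=
  (dotProductBilin K K).compl₁₂ (LinearMap.fst K _ _) (LinearMap.snd K _ _) -
    (dotProductBilin K K).compl₁₂ (LinearMap.snd K _ _) (LinearMap.fst K _ _)

theorem symplecticForm_apply {K n : Type*} [CommRing K] [Fintype n] (u v : (n → K) × (n → K)) :
    symplecticForm K n u v = u.1 ⬝ᵥ v.2 - u.2 ⬝ᵥ v.1 :=
  rfl

theorem sp_eq_symplecticForm_swap {n : ℕ} (u v : V n) :
    sp u v = symplecticForm (ZMod 2) (Fin n) v u := by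
  simp only [sp, symplecticForm_apply, dotProduct, Finset.sum_add_distrib, CharTwo.sub_eq_add,
    mul_comm, add_comm]

theorem sOrth_eq_orthogonalBilin {n : ℕ} (W : Submodule (ZMod 2) (V n)) :
    sOrth W = W.orthogonalBilin (symplecticForm (ZMod 2) (Fin n)) := by
  ext v
  exact forall₂_congr fun u _ => by rw [sp_eq_symplecticForm_swap]

end Symplectic

section CSS

variable {K m₁ m₂ n : Type*}

/-- The rows of the block-diagonal check matrix `diag(A, B)` of the CSS construction from two
classical codes with parity-check matrices `A` and `B`. The symmetric construction from `H` is the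
case `A = B = H`. -/
def cssGenerators [Zero K] (A : Matrix m₁ n K) (B : Matrix m₂ n K) :
    m₁ ⊕ m₂ → (n → K) × (n → K) :=
  Sum.elim (fun i => (A i, 0)) (fun j => (0, B j))

theorem gramMatrix_cssGenerators [CommRing K] [Fintype n] (A : Matrix m₁ n K)
    (B : Matrix m₂ n K) :
    gramMatrix (symplecticForm K n) (cssGenerators A B) (cssGenerators A B) =
      fromBlocks 0 (A * Bᵀ) (-(A * Bᵀ)ᵀ) 0 := by
  ext (i | i) (j | j) <;>
    simp [gramMatrix, cssGenerators, symplecticForm_apply, mul_apply, dotProduct, mul_comm]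

theorem rank_gramMatrix_cssGenerators [Field K] [Fintype m₁] [Fintype m₂] [Fintype n]
    (A : Matrix m₁ n K) (B : Matrix m₂ n K) :
    (gramMatrix (symplecticForm K n) (cssGenerators A B) (cssGenerators A B)).rank =
      2 * (A * Bᵀ).rank := by
  have hneg : (-(A * Bᵀ)ᵀ).rank = (A * Bᵀ).rank := by
    rw [← transpose_neg, rank_transpose, ← neg_one_smul K,
      rank_smul_of_mem_nonZeroDivisors _ (by simp)]
  rw [gramMatrix_cssGenerators, rank_fromBlocks_antidiagonal, hneg, two_mul]

theorem css_ebits_eq_rank_general [Field K] [Finite m₁] [Fintype m₂] [Fintype n]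
    (A : Matrix m₁ n K) (B : Matrix m₂ n K) (W : Submodule K ((n → K) × (n → K)))
    (hW : W = Submodule.span K (Set.range (cssGenerators A B))) :
    finrank K W - finrank K ↥(W ⊓ W.orthogonalBilin (symplecticForm K n)) =
      2 * (A * Bᵀ).rank := by
  have := Fintype.ofFinite m₁
  rw [hW, ← rank_gramMatrix_add_finrank_inf_orthogonalBilin (symplecticForm K n)
    (cssGenerators A B), rank_gramMatrix_cssGenerators, Nat.add_sub_cancel_right]

end CSS

/-- For the CSS subspace `W` spanned by the rows `(H j, 0)` and `(0, H j)` of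
`diag(H,H)`, the dimension of `W` minus the dimension of its radical
`rad(W) = W ⊓ W^⊥` equals `2 · rank(H Hᵀ)`; i.e. the number of ebits needed in the
entanglement-assisted CSS construction is `c = rank(H Hᵀ)`. -/
theorem css_ebits_eq_rank (m n : ℕ) (H : Matrix (Fin m) (Fin n) (ZMod 2))
    (W : Submodule (ZMod 2) (V n))
    (hW : W = Submodule.span (ZMod 2)
      ((Set.range fun j : Fin m => ((H j, 0) : V n)) ∪
       (Set.range fun j : Fin m => (((0 : Fin n → ZMod 2), H j) : V n)))) :
    Module.finrank (ZMod 2) W - Module.finrank (ZMod 2) ↥(W ⊓ sOrth W)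
      = 2 * (H * Hᵀ).rank := by
  rw [sOrth_eq_orthogonalBilin]
  exact css_ebits_eq_rank_general H H W (hW.trans (by rw [cssGenerators, Set.Sum.elim_range]))
end

section
/- Let A : Matrix (Fin n) (Fin n) (ZMod 2) be symmetric (Aᵀ = A). Then there exist an invertible matrix P : Matrix (Fin n) (Fin n) (ZMod 2) and natural numbers p, q with p + 2*q = A.rank and p + 2*q ≤ n such that B := P * A * Pᵀ has the normal form: B i i = 1 for i < p; B (p+2t) (p+2t+1) = 1 and B (p+2t+1) (p+2t) = 1 for t < q; and all other entries of B are 0. -/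
/-!
Over a field in which every element is a square, a vector `x` with `xᵀ A x ≠ 0` can be rescaled so
that `xᵀ A x = 1`, and its orthogonal complement splits off. Repeating this leaves `1 ⊕ D` with `D`
alternating. If `D i j ≠ 0`, the basis vectors `i` and `j` span, after rescaling, a hyperbolic
plane, whose orthogonal complement splits off too; repeating this leaves zero. In both cases the
complement carries the Schur complement of an invertible principal block. The hyperbolic planes of
an alternating form are `!![0, -1; 1, 0]`; the symmetry of `A` turns the `-1` into `1`.
-/

open Matrix

namespace SymmetricNormalForm

theorem rank_fromBlocks_zero {R m n : Type*} [CommRing R] [Nontrivial R] [Fintype m] [Fintype n]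
    (A : Matrix m m R) :
    (fromBlocks A 0 0 (0 : Matrix n n R)).rank = A.rank := by
  classical
  apply le_antisymm
  · have hA : fromBlocks A 0 0 (0 : Matrix n n R) =
        fromRows (1 : Matrix m m R) 0 * A * fromCols (1 : Matrix m m R) 0 := by
      rw [fromRows_mul, fromRows_mul_fromCols]
      simp
    rw [hA]
    exact (rank_mul_le_left _ _).trans (rank_mul_le_right _ _)
  · exact rank_submatrix_le (fromBlocks A 0 0 (0 : Matrix n n R)) Sum.inl Sum.inl

variable {l m n o k : Type*} [Fintype l] [Fintype m] [Fintype n] [Fintype o] [Fintype k]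
  [DecidableEq l] [DecidableEq m] [DecidableEq n] [DecidableEq o] [DecidableEq k]

section CommRing

variable {R : Type*} [CommRing R]

/-- Congruence of square matrices, `B = P * A * Pᵀ` with `P` invertible. The index types may differ,
so that reindexing is a congruence; invertibility of the rectangular `P` is expressed by a two-sided
inverse `Q`. -/
def IsCongruent (A : Matrix m m R) (B : Matrix n n R) : Prop :=
  ∃ (P : Matrix n m R) (Q : Matrix m n R), P * Q = 1 ∧ Q * P = 1 ∧ P * A * Pᵀ = B

namespace IsCongruent

theorem of_isUnit (A : Matrix m m R) {P : Matrix m m R} (hP : IsUnit P) :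
    IsCongruent A (P * A * Pᵀ) := by
  obtain ⟨u, rfl⟩ := hP
  exact ⟨u, ↑u⁻¹, u.mul_inv, u.inv_mul, rfl⟩

theorem refl (A : Matrix m m R) : IsCongruent A A := by
  simpa using of_isUnit A isUnit_one

theorem symm {A : Matrix m m R} {B : Matrix n n R} (h : IsCongruent A B) : IsCongruent B A := by
  obtain ⟨P, Q, hPQ, hQP, rfl⟩ := h
  refine ⟨Q, P, hQP, hPQ, ?_⟩
  calc Q * (P * A * Pᵀ) * Qᵀ = (Q * P) * A * (Q * P)ᵀ := by
        simp only [transpose_mul, Matrix.mul_assoc]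
    _ = A := by simp only [hQP, transpose_one, Matrix.one_mul, Matrix.mul_one]

theorem trans {A : Matrix l l R} {B : Matrix m m R} {C : Matrix n n R} (h : IsCongruent A B)
    (h' : IsCongruent B C) : IsCongruent A C := by
  obtain ⟨P, Q, hPQ, hQP, rfl⟩ := h
  obtain ⟨P', Q', hPQ', hQP', rfl⟩ := h'
  refine ⟨P' * P, Q * Q', ?_, ?_, ?_⟩
  · rw [Matrix.mul_assoc, ← Matrix.mul_assoc P, hPQ, Matrix.one_mul, hPQ']
  · rw [Matrix.mul_assoc, ← Matrix.mul_assoc Q', hQP', Matrix.one_mul, hQP]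
  · simp only [transpose_mul, Matrix.mul_assoc]

theorem submatrix (A : Matrix m m R) (e : n ≃ m) : IsCongruent A (A.submatrix e e) := by
  refine ⟨(1 : Matrix m m R).submatrix e id, (1 : Matrix m m R).submatrix id e, ?_, ?_, ?_⟩
  · rw [← submatrix_mul _ _ _ _ _ Function.bijective_id]
    simp
  · rw [← submatrix_mul _ _ _ _ _ e.bijective]
    simp
  · ext i j
    simp [mul_apply, one_apply]

theorem fromBlocks {A : Matrix l l R} {B : Matrix m m R} {C : Matrix n n R} {D : Matrix o o R}
    (h : IsCongruent A B) (h' : IsCongruent C D) :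
    IsCongruent (fromBlocks A 0 0 C) (fromBlocks B 0 0 D) := by
  obtain ⟨P, Q, hPQ, hQP, rfl⟩ := h
  obtain ⟨P', Q', hPQ', hQP', rfl⟩ := h'
  refine ⟨Matrix.fromBlocks P 0 0 P', Matrix.fromBlocks Q 0 0 Q', ?_, ?_, ?_⟩ <;>
    simp [fromBlocks_multiply, fromBlocks_transpose, hPQ, hQP, hPQ', hQP']

theorem fromBlocks_of_isEmpty [IsEmpty o] (E : Matrix o o R) (A : Matrix m m R) (e : n ≃ m) :
    IsCongruent A (Matrix.fromBlocks E 0 0 (A.submatrix e e)) := by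
  convert submatrix A ((Equiv.emptySum o n).trans e) using 1
  ext (i | i) (j | j)
  · exact isEmptyElim i
  · exact isEmptyElim i
  · exact isEmptyElim j
  · rfl

theorem fromBlocks_assoc (A : Matrix l l R) (B : Matrix m m R) (C : Matrix n n R) :
    IsCongruent (Matrix.fromBlocks A 0 0 (Matrix.fromBlocks B 0 0 C))
      (Matrix.fromBlocks (Matrix.fromBlocks A 0 0 B) 0 0 C) := by
  convert submatrix (Matrix.fromBlocks A 0 0 (Matrix.fromBlocks B 0 0 C))
    (Equiv.sumAssoc l m n) using 1
  ext ((i | i) | i) ((j | j) | j) <;> rfl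

theorem one_add (p q : ℕ) :
    IsCongruent (Matrix.fromBlocks (1 : Matrix (Fin p) (Fin p) R) 0 0
      (1 : Matrix (Fin q) (Fin q) R)) (1 : Matrix (Fin (p + q)) (Fin (p + q)) R) := by
  rw [fromBlocks_one, ← submatrix_one_equiv finSumFinEquiv.symm]
  exact submatrix 1 _

theorem J_of_equiv (e : l ≃ m) : IsCongruent (J l R) (J m R) := by
  convert submatrix (J l R) (e.symm.sumCongr e.symm) using 1
  ext (i | i) (j | j) <;> simp [J, one_apply]

theorem J_sum : IsCongruent (Matrix.fromBlocks (J l R) 0 0 (J m R)) (J (l ⊕ m) R) := by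
  convert submatrix (Matrix.fromBlocks (J l R) 0 0 (J m R)) (Equiv.sumSumSumComm l m l m) using 1
  ext ((i | i) | (i | i)) ((j | j) | (j | j)) <;> simp [J, one_apply]

theorem card_eq [Nontrivial R] {A : Matrix m m R} {B : Matrix n n R} (h : IsCongruent A B) :
    Fintype.card m = Fintype.card n := by
  obtain ⟨P, Q, hPQ, hQP, -⟩ := h
  exact square_of_invertible Q P hQP hPQ

theorem rank_le [Nontrivial R] {A : Matrix m m R} {B : Matrix n n R} (h : IsCongruent A B) :
    B.rank ≤ A.rank := by
  obtain ⟨P, -, -, -, rfl⟩ := h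
  exact (rank_mul_le_left _ _).trans (rank_mul_le_right _ _)

theorem rank_eq [Nontrivial R] {A : Matrix m m R} {B : Matrix n n R} (h : IsCongruent A B) :
    A.rank = B.rank :=
  le_antisymm h.symm.rank_le h.rank_le

theorem isSymm {A : Matrix m m R} {B : Matrix n n R} (h : IsCongruent A B) (hA : A.IsSymm) :
    B.IsSymm := by
  obtain ⟨P, Q, -, -, rfl⟩ := h
  simp only [IsSymm, transpose_mul, transpose_transpose, hA.eq, Matrix.mul_assoc]

theorem isAlt {A : Matrix m m R} {B : Matrix n n R} (h : IsCongruent A B)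
    (hA : (toBilin' A).IsAlt) : (toBilin' B).IsAlt := by
  obtain ⟨P, Q, -, -, rfl⟩ := h
  intro x
  have hx : Pᵀ *ᵥ x ⬝ᵥ A *ᵥ (Pᵀ *ᵥ x) = 0 := by
    simpa only [toBilin'_apply'] using hA (Pᵀ *ᵥ x)
  rwa [toBilin'_apply', ← mulVec_mulVec, ← mulVec_mulVec, dotProduct_mulVec,
    ← mulVec_transpose]

theorem sq_smul (A : Matrix m m R) (u : Rˣ) : IsCongruent ((u : R) ^ 2 • A) A := by
  refine ⟨(↑u⁻¹ : R) • 1, (u : R) • 1, ?_, ?_, ?_⟩ <;> simp [smul_smul, pow_two]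

theorem smul_J (u : Rˣ) : IsCongruent ((u : R) • J l R) (J l R) := by
  refine ⟨Matrix.fromBlocks ((↑u⁻¹ : R) • 1) 0 0 1, Matrix.fromBlocks ((u : R) • 1) 0 0 1,
    ?_, ?_, ?_⟩ <;>
    simp [J, fromBlocks_multiply, fromBlocks_transpose, fromBlocks_smul, smul_smul]

end IsCongruent

theorem isAlt_of_isAlt_fromBlocks {H : Matrix k k R} {D : Matrix m m R}
    (h : (toBilin' (fromBlocks H 0 0 D)).IsAlt) : (toBilin' D).IsAlt := by
  intro x
  simpa [toBilin'_apply', fromBlocks_mulVec] using h (Sum.elim 0 x)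

theorem transpose_eq_neg_of_isAlt {A : Matrix m m R} (hA : (toBilin' A).IsAlt) : Aᵀ = -A := by
  ext i j
  simpa using (hA.neg_eq (Pi.single i 1) (Pi.single j 1)).symm

theorem apply_self_of_isAlt {A : Matrix m m R} (hA : (toBilin' A).IsAlt) (i : m) : A i i = 0 := by
  simpa using hA (Pi.single i 1)

/-- `Aᵀ = ε • A` covers the symmetric and the alternating case at once: it makes the two triangular
factors of the block `LDU` decomposition transposes of each other. -/
theorem isCongruent_schurComplement {H : Matrix k k R} {B : Matrix k m R} {C : Matrix m k R}
    {D : Matrix m m R} [Invertible H] {ε : R}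
    (hA : (fromBlocks H B C D)ᵀ = ε • fromBlocks H B C D) :
    IsCongruent (fromBlocks H B C D) (fromBlocks H 0 0 (D - C * ⅟H * B)) := by
  rw [fromBlocks_transpose, fromBlocks_smul, fromBlocks_inj] at hA
  obtain ⟨hH, hC, -, -⟩ := hA
  have hU : (C * ⅟H)ᵀ = ⅟H * B := by
    let := invertibleTranspose H
    rw [transpose_mul, transpose_invOf, Matrix.invOf_mul_eq_iff_eq_mul_left, hH, hC]
    simp
  have hL : (fromBlocks (1 : Matrix k k R) 0 (C * ⅟H) (1 : Matrix m m R))ᵀ =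
      fromBlocks 1 (⅟H * B) 0 1 := by
    simp only [fromBlocks_transpose, transpose_one, transpose_zero, hU]
  rw [fromBlocks_eq_of_invertible₁₁ H B C D, ← hL]
  exact (IsCongruent.of_isUnit _ (by simp)).symm

theorem exists_isCongruent_fromBlocks {A : Matrix m m R} {ε : R} (hA : Aᵀ = ε • A) {f : k → m}
    (hf : Function.Injective f) (hH : IsUnit (A.submatrix f f)) :
    ∃ D : Matrix {x // x ∉ Set.range f} {x // x ∉ Set.range f} R,
      IsCongruent A (fromBlocks (A.submatrix f f) 0 0 D) := by
  classical
  let e : k ⊕ {x // x ∉ Set.range f} ≃ m :=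
    ((Equiv.ofInjective f hf).sumCongr (Equiv.refl _)).trans (Equiv.sumCompl (· ∈ Set.range f))
  have hblock : A.submatrix e e = fromBlocks (A.submatrix f f) (A.submatrix f Subtype.val)
      (A.submatrix Subtype.val f) (A.submatrix Subtype.val Subtype.val) := by
    ext (i | i) (j | j) <;> rfl
  have hAe : (A.submatrix e e)ᵀ = ε • A.submatrix e e := by
    rw [transpose_submatrix, hA, submatrix_smul]
    rfl
  rw [hblock] at hAe
  let := hH.invertible
  exact ⟨_, (IsCongruent.submatrix A e).trans (hblock ▸ isCongruent_schurComplement hAe)⟩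

/-- The direct sum of an identity block, a symplectic block and a zero block. In `J (Fin q) R` the
`t`-th hyperbolic block `!![0, -1; 1, 0]` occupies the indices `inl t` and `inr t`. -/
def normalForm (R : Type*) [CommRing R] (p q r : ℕ) :
    Matrix ((Fin p ⊕ (Fin q ⊕ Fin q)) ⊕ Fin r) ((Fin p ⊕ (Fin q ⊕ Fin q)) ⊕ Fin r) R :=
  fromBlocks (fromBlocks 1 0 0 (J (Fin q) R)) 0 0 0

theorem rank_normalForm [Nontrivial R] (p q r : ℕ) : (normalForm R p q r).rank = p + 2 * q := by
  have hunit : IsUnit (fromBlocks (1 : Matrix (Fin p) (Fin p) R) 0 0 (J (Fin q) R)) :=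
    isUnit_fromBlocks_zero₂₁.2 ⟨isUnit_one, (isUnit_iff_isUnit_det _).2 (isUnit_det_J _ _)⟩
  rw [normalForm, rank_fromBlocks_zero, rank_of_isUnit _ hunit]
  simp [two_mul]

end CommRing

section Field

variable {K : Type*} [Field K]

theorem exists_isCongruent_J {m : Type*} [Fintype m] [DecidableEq m] {A : Matrix m m K}
    (hA : (toBilin' A).IsAlt) :
    ∃ q r : ℕ, IsCongruent A (fromBlocks (J (Fin q) K) 0 0 (0 : Matrix (Fin r) (Fin r) K)) := by
  induction hm : Fintype.card m using Nat.strong_induction_on generalizing m with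
  | _ N ih =>
  by_cases hA0 : A = 0
  · subst hA0
    exact ⟨0, _, IsCongruent.fromBlocks_of_isEmpty _ 0 (Fintype.equivFin m).symm⟩
  obtain ⟨i, j, hij⟩ : ∃ i j, A i j ≠ 0 := by
    by_contra! h
    exact hA0 (Matrix.ext h)
  have hne : j ≠ i := by
    rintro rfl
    exact hij (apply_self_of_isAlt hA j)
  let f : Fin 1 ⊕ Fin 1 → m := Sum.elim (fun _ => j) (fun _ => i)
  have hf : Function.Injective f :=
    (Function.injective_of_subsingleton _).sumElim (Function.injective_of_subsingleton _)
      fun _ _ => hne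
  have hskew : Aᵀ = (-1 : K) • A := by rw [transpose_eq_neg_of_isAlt hA, neg_one_smul]
  have hH : A.submatrix f f = (Units.mk0 _ hij : K) • J (Fin 1) K := by
    have hji : A j i = -A i j := congrFun₂ (transpose_eq_neg_of_isAlt hA) i j
    ext (a | a) (b | b) <;>
      simp [f, J, apply_self_of_isAlt hA, hji, Subsingleton.elim a b]
  have hHunit : IsUnit (A.submatrix f f) := by
    rw [hH]
    exact ((isUnit_iff_isUnit_det _).2 (isUnit_det_J _ _)).smul (Units.mk0 _ hij)
  obtain ⟨D, hAD⟩ := exists_isCongruent_fromBlocks hskew hf hHunit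
  have hcard : Fintype.card {x // x ∉ Set.range f} < N :=
    hm ▸ Fintype.card_subtype_lt (x := i) (by simp [f])
  obtain ⟨q, r, hD⟩ := ih _ hcard (isAlt_of_isAlt_fromBlocks (hAD.isAlt hA)) rfl
  rw [hH] at hAD
  have hJ : IsCongruent (fromBlocks (J (Fin 1) K) 0 0 (J (Fin q) K)) (J (Fin (1 + q)) K) :=
    IsCongruent.J_sum.trans (.J_of_equiv finSumFinEquiv)
  exact ⟨1 + q, r, hAD.trans <| ((IsCongruent.smul_J _).fromBlocks hD).trans <|
    (IsCongruent.fromBlocks_assoc _ _ _).trans <| hJ.fromBlocks (.refl 0)⟩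

theorem exists_isCongruent_apply_self_ne_zero {A : Matrix m m K} (hA : ¬(toBilin' A).IsAlt) :
    ∃ (B : Matrix m m K) (i : m), IsCongruent A B ∧ B i i ≠ 0 := by
  obtain ⟨x, hx⟩ : ∃ x, x ⬝ᵥ A *ᵥ x ≠ 0 := by
    simpa only [LinearMap.BilinForm.IsAlt, LinearMap.IsAlt, toBilin'_apply', not_forall] using hA
  obtain ⟨i, hi⟩ : ∃ i, x i ≠ 0 := by
    rw [← Function.ne_iff]
    rintro rfl
    simp at hx
  let P : Matrix m m K := updateRow 1 i x
  have hP : IsUnit P := by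
    rw [isUnit_iff_isUnit_det, isUnit_iff_ne_zero]
    simpa [P, ← cramer_transpose_apply] using hi
  have hPi : (P * A * Pᵀ) i i = x ⬝ᵥ A *ᵥ x := by
    have hrow : P i = x := updateRow_self
    rw [mul_mul_apply, transpose_transpose, hrow]
  exact ⟨_, i, IsCongruent.of_isUnit A hP, hPi ▸ hx⟩

theorem exists_isCongruent_one_isAlt (hK : ∀ a : K, IsSquare a) {m : Type*} [Fintype m]
    [DecidableEq m] {A : Matrix m m K} (hA : A.IsSymm) :
    ∃ (p r : ℕ) (D : Matrix (Fin r) (Fin r) K), (toBilin' D).IsAlt ∧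
      IsCongruent A (fromBlocks (1 : Matrix (Fin p) (Fin p) K) 0 0 D) := by
  induction hm : Fintype.card m using Nat.strong_induction_on generalizing m with
  | _ N ih =>
  by_cases hAlt : (toBilin' A).IsAlt
  · let e := (Fintype.equivFin m).symm
    exact ⟨0, _, _, (IsCongruent.submatrix A e).isAlt hAlt, IsCongruent.fromBlocks_of_isEmpty 1 A e⟩
  obtain ⟨B, i, hAB, hi⟩ := exists_isCongruent_apply_self_ne_zero hAlt
  have hB : B.IsSymm := hAB.isSymm hA
  obtain ⟨c, hc⟩ := hK (B i i)
  have hc0 : c ≠ 0 := by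
    rintro rfl
    simp [hc] at hi
  let f : Fin 1 → m := fun _ => i
  have hH : B.submatrix f f = (Units.mk0 c hc0 : K) ^ 2 • 1 := by
    ext a b
    simp [f, hc, Subsingleton.elim a b, pow_two]
  have hHunit : IsUnit (B.submatrix f f) := by
    rw [hH]
    exact (isUnit_one (M := Matrix (Fin 1) (Fin 1) K)).smul (Units.mk0 c hc0 ^ 2)
  obtain ⟨D, hBD⟩ := exists_isCongruent_fromBlocks (ε := 1) (by rw [hB.eq, one_smul])
    (Function.injective_of_subsingleton f) hHunit
  have hcard : Fintype.card {x // x ∉ Set.range f} < N :=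
    hm ▸ Fintype.card_subtype_lt (x := i) (by simp [f])
  obtain ⟨p, r, E, hE, hDE⟩ :=
    ih _ hcard (isSymm_fromBlocks_iff.1 (hBD.isSymm hB)).2.2.2 rfl
  rw [hH] at hBD
  exact ⟨1 + p, r, E, hE, (hAB.trans hBD).trans <|
    ((IsCongruent.sq_smul 1 _).fromBlocks hDE).trans <|
    (IsCongruent.fromBlocks_assoc _ _ _).trans <| (IsCongruent.one_add 1 p).fromBlocks (.refl E)⟩

theorem exists_isCongruent_normalForm (hK : ∀ a : K, IsSquare a) {A : Matrix m m K}
    (hA : A.IsSymm) : ∃ p q r : ℕ, IsCongruent A (normalForm K p q r) := by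
  obtain ⟨p, _, D, hD, hAD⟩ := exists_isCongruent_one_isAlt hK hA
  obtain ⟨q, r, hDJ⟩ := exists_isCongruent_J hD
  exact ⟨p, q, r, hAD.trans <| ((IsCongruent.refl 1).fromBlocks hDJ).trans <|
    IsCongruent.fromBlocks_assoc _ _ _⟩

end Field

/-- The numbering of the indices of `normalForm` in which the two indices of each hyperbolic block
are adjacent. -/
def normalFormIndexEquiv (p q r : ℕ) :
    (Fin p ⊕ (Fin q ⊕ Fin q)) ⊕ Fin r ≃ Fin (p + q * 2 + r) :=
  let pairs : Fin q ⊕ Fin q ≃ Fin (q * 2) :=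
    (Equiv.boolProdEquivSum _).symm.trans <| (Equiv.prodComm _ _).trans <|
      ((Equiv.refl _).prodCongr finTwoEquiv.symm).trans finProdFinEquiv
  ((((Equiv.refl _).sumCongr pairs).trans finSumFinEquiv).sumCongr (Equiv.refl _)).trans
    finSumFinEquiv

section normalFormIndexEquiv

variable {p q r : ℕ}

@[simp]
theorem val_normalFormIndexEquiv_left (t : Fin q) :
    (normalFormIndexEquiv p q r (.inl (.inr (.inl t))) : ℕ) = p + 2 * t := by
  simp [normalFormIndexEquiv, finTwoEquiv]

@[simp]
theorem val_normalFormIndexEquiv_right (t : Fin q) :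
    (normalFormIndexEquiv p q r (.inl (.inr (.inr t))) : ℕ) = p + 2 * t + 1 := by
  simp [normalFormIndexEquiv, finTwoEquiv, add_comm 1, add_assoc]

theorem normalForm_apply_eq_zero {R : Type*} [CommRing R]
    {a b : (Fin p ⊕ (Fin q ⊕ Fin q)) ⊕ Fin r}
    (hone : ¬(a = b ∧ (normalFormIndexEquiv p q r a : ℕ) < p))
    (hpair : ¬∃ t < q, ((normalFormIndexEquiv p q r a : ℕ) = p + 2 * t ∧
        (normalFormIndexEquiv p q r b : ℕ) = p + 2 * t + 1) ∨
      ((normalFormIndexEquiv p q r a : ℕ) = p + 2 * t + 1 ∧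
        (normalFormIndexEquiv p q r b : ℕ) = p + 2 * t)) :
    normalForm R p q r a b = 0 := by
  rcases a with (i | i | i) | i <;> rcases b with (j | j | j) | j
  any_goals rfl
  · have hij : i ≠ j := by
      rintro rfl
      exact hone ⟨rfl, i.2⟩
    simp [normalForm, hij]
  · have hij : i ≠ j := by
      rintro rfl
      exact hpair ⟨i, i.2, .inl ⟨by simp, by simp⟩⟩
    simp [normalForm, J, hij]
  · have hij : i ≠ j := by
      rintro rfl
      exact hpair ⟨i, i.2, .inr ⟨by simp, by simp⟩⟩
    simp [normalForm, J, hij]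

end normalFormIndexEquiv

end SymmetricNormalForm

open SymmetricNormalForm in
theorem symmetric_normal_form_zmod2_general {K : Type*} [Field K] (hK : ∀ a : K, IsSquare a)
    (n : ℕ) (A : Matrix (Fin n) (Fin n) K) (hA : Aᵀ = A) :
    ∃ (P : Matrix (Fin n) (Fin n) K) (p q : ℕ),
      IsUnit P ∧ p + 2 * q = A.rank ∧ p + 2 * q ≤ n ∧
      (∀ i : Fin n, (i : ℕ) < p → (P * A * Pᵀ) i i = 1) ∧
      (∀ t : ℕ, t < q → ∀ (hi : p + 2 * t < n) (hj : p + 2 * t + 1 < n),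
        (P * A * Pᵀ) ⟨p + 2 * t, hi⟩ ⟨p + 2 * t + 1, hj⟩ = 1 ∧
        (P * A * Pᵀ) ⟨p + 2 * t + 1, hj⟩ ⟨p + 2 * t, hi⟩ = 1) ∧
      (∀ i j : Fin n,
        ¬(i = j ∧ (i : ℕ) < p) →
        ¬(∃ t : ℕ, t < q ∧ (((i : ℕ) = p + 2 * t ∧ (j : ℕ) = p + 2 * t + 1) ∨
            ((i : ℕ) = p + 2 * t + 1 ∧ (j : ℕ) = p + 2 * t))) →
        (P * A * Pᵀ) i j = 0) := by
  obtain ⟨p, q, r, hAN⟩ := exists_isCongruent_normalForm hK hA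
  obtain rfl : n = p + q * 2 + r := by simpa [mul_two] using hAN.card_eq
  let e := normalFormIndexEquiv p q r
  have hAB : IsCongruent A ((normalForm K p q r).submatrix e.symm e.symm) :=
    hAN.trans (.submatrix _ _)
  have hBsymm := hAB.isSymm hA
  obtain ⟨P, Q, hPQ, hQP, hB⟩ := hAB
  rw [← hB] at hBsymm
  have hentry (a b) : (P * A * Pᵀ) (e a) (e b) = normalForm K p q r a b := by simp [hB]
  refine ⟨P, p, q, ⟨⟨P, Q, hPQ, hQP⟩, rfl⟩, ?_, by omega, fun i hi => ?_, fun t ht hi hj => ?_,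
    e.surjective.forall₂.2 fun a b hone hpair => ?_⟩
  · rw [hAN.rank_eq, rank_normalForm]
  · have hi' : e (.inl (.inl ⟨i, hi⟩)) = i := rfl
    rw [← hi', hentry]
    simp [normalForm]
  · have hi' : e (.inl (.inr (.inl ⟨t, ht⟩))) = ⟨p + 2 * t, hi⟩ := Fin.ext (by simp [e])
    have hj' : e (.inl (.inr (.inr ⟨t, ht⟩))) = ⟨p + 2 * t + 1, hj⟩ := Fin.ext (by simp [e])
    rw [hBsymm.apply, and_self, ← hi', ← hj', hentry]
    simp [normalForm, J]
  · rw [hentry]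
    exact normalForm_apply_eq_zero (by rwa [e.apply_eq_iff_eq] at hone) hpair

/-- Congruence normal form of a symmetric matrix over `𝔽₂`: any symmetric
`A : Matrix (Fin n) (Fin n) (ZMod 2)` is congruent, via an invertible `P`, to a direct
sum of a `p × p` identity block, `q` hyperbolic blocks `!![0,1;1,0]`, and a zero block,
with `p + 2q = rank A`. -/
theorem symmetric_normal_form_zmod2 (n : ℕ) (A : Matrix (Fin n) (Fin n) (ZMod 2))
    (hA : Aᵀ = A) :
    ∃ (P : Matrix (Fin n) (Fin n) (ZMod 2)) (p q : ℕ),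
      IsUnit P ∧ p + 2 * q = A.rank ∧ p + 2 * q ≤ n ∧
      (∀ i : Fin n, (i : ℕ) < p → (P * A * Pᵀ) i i = 1) ∧
      (∀ t : ℕ, t < q → ∀ (hi : p + 2 * t < n) (hj : p + 2 * t + 1 < n),
        (P * A * Pᵀ) ⟨p + 2 * t, hi⟩ ⟨p + 2 * t + 1, hj⟩ = 1 ∧
        (P * A * Pᵀ) ⟨p + 2 * t + 1, hj⟩ ⟨p + 2 * t, hi⟩ = 1) ∧
      (∀ i j : Fin n,
        ¬(i = j ∧ (i : ℕ) < p) →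
        ¬(∃ t : ℕ, t < q ∧ (((i : ℕ) = p + 2 * t ∧ (j : ℕ) = p + 2 * t + 1) ∨
            ((i : ℕ) = p + 2 * t + 1 ∧ (j : ℕ) = p + 2 * t))) →
        (P * A * Pᵀ) i j = 0) :=
  symmetric_normal_form_zmod2_general (fun a => isSquare_of_charTwo' a) n A hA
end

section
/- Let r ≥ 1 and c : ZMod r → ZMod 2, let M := Matrix.circulant c, and let M(X) := ∑_{i=0}^{r−1} (c i) • X^i ∈ (ZMod 2)[X] (sum over the representatives 0 ≤ i < r). Let K := gcd(M(X), X^r − 1) in (ZMod 2)[X] and k := K.natDegree. Then M.rank = r − k. -/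
open Polynomial

/-!
Over a field `F`, the powers `1, x, …, x ^ (r - 1)` of the class `x` of `X` form a basis, indexed
by `ZMod r`, of `A = F[X] / (X ^ r - 1)`. Since `x ^ r = 1`, multiplication by the class of `M(X)`
has matrix `circulant c` in this basis. The rank is therefore the dimension of the ideal of `A`
generated by `M(X)`, and the quotient of `A` by this ideal is
`F[X] / (M(X), X ^ r - 1) = F[X] / (K)`, of dimension `deg K`.
-/

theorem leftMulMatrix_sum_smul_eq_circulant {R S G : Type*} [CommSemiring R] [Semiring S]
    [Algebra R S] [AddGroup G] [Fintype G] [DecidableEq G] {b : Module.Basis G R S}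
    (hb : ∀ i j, b (i + j) = b i * b j) (c : G → R) :
    Algebra.leftMulMatrix b (∑ i, c i • b i) = Matrix.circulant c := by
  ext i j
  simp [Algebra.leftMulMatrix_eq_repr_mul, Finset.sum_mul, ← hb, Finsupp.single_apply,
    ← eq_sub_iff_add_eq]

theorem rank_leftMulMatrix_add_finrank_quotient {F A ι : Type*} [Field F] [CommRing A]
    [Algebra F A] [Fintype ι] [DecidableEq ι] (b : Module.Basis ι F A) (a : A) :
    (Algebra.leftMulMatrix b a).rank + Module.finrank F (A ⧸ Ideal.span {a}) =
      Module.finrank F A := by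
  have : Module.Finite F A := .of_basis b
  have range_mul : LinearMap.range (Algebra.lmul F A a) =
      (Ideal.span {a}).restrictScalars F := by
    ext y
    simp [Ideal.mem_span_singleton, dvd_def]
  rw [Matrix.rank_eq_finrank_range_toLin _ b b, Algebra.leftMulMatrix_apply,
    Matrix.toLin_toMatrix, range_mul, add_comm]
  exact Submodule.finrank_quotient_add_finrank ((Ideal.span {a}).restrictScalars F)

theorem finrank_adjoinRoot_quotient_span_mk {F : Type*} [Field F] [DecidableEq F] (p f : F[X]) :
    Module.finrank F (AdjoinRoot f ⧸ Ideal.span {AdjoinRoot.mk f p}) =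
      (EuclideanDomain.gcd p f).natDegree := by
  have map_span : Ideal.span {AdjoinRoot.mk f p} =
      (Ideal.span {p}).map (Ideal.Quotient.mkₐ F (Ideal.span {f})) := by
    rw [Ideal.map_span, Set.image_singleton]
    rfl
  have sup_span : Ideal.span {f} ⊔ Ideal.span {p} =
      Ideal.span {EuclideanDomain.gcd p f} := by
    rw [EuclideanDomain.span_gcd, sup_comm, Ideal.span_insert]
  rw [map_span, ← finrank_quotient_span_eq_natDegree, ← sup_span]
  exact (DoubleQuot.quotQuotEquivQuotSupₐ F _ _).toLinearEquiv.finrank_eq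

section CyclicBasis

variable (R : Type*) [CommRing R] [Nontrivial R] (r : ℕ) [NeZero r]

/-- The basis `1, x, …, x ^ (r - 1)` of `R[X] / (X ^ r - 1)`, where `x` is the class of `X`. It is
indexed by `ZMod r` rather than `Fin r` because exponents only matter modulo `r`. -/
noncomputable def cyclicBasis : Module.Basis (ZMod r) R (AdjoinRoot (X ^ r - 1 : R[X])) :=
  have monic : (X ^ r - 1 : R[X]).Monic :=
    Monic.def.mpr (leadingCoeff_X_pow_sub_one (NeZero.pos r))
  have dim_eq : (AdjoinRoot.powerBasis' monic).dim = r := by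
    rw [AdjoinRoot.powerBasis'_dim, ← C_1, natDegree_X_pow_sub_C]
  (AdjoinRoot.powerBasis' monic).basis.reindex
    ((finCongr dim_eq).trans (ZMod.finEquiv r).toEquiv)

theorem cyclicBasis_apply (i : ZMod r) :
    cyclicBasis R r i = AdjoinRoot.root (X ^ r - 1 : R[X]) ^ i.val := by
  have val_symm : ((ZMod.finEquiv r).symm i : ℕ) = i.val := by
    cases r with
    | zero => exact absurd rfl (NeZero.ne 0)
    | succ n => rfl
  simp [cyclicBasis, ← val_symm]

theorem cyclicBasis_add (i j : ZMod r) :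
    cyclicBasis R r (i + j) = cyclicBasis R r i * cyclicBasis R r j := by
  have root_pow : AdjoinRoot.root (X ^ r - 1 : R[X]) ^ r = 1 := by
    have eval_root := AdjoinRoot.eval₂_root (X ^ r - 1 : R[X])
    rwa [eval₂_sub, eval₂_X_pow, eval₂_one, sub_eq_zero] at eval_root
  simp only [cyclicBasis_apply, ZMod.val_add, ← pow_add]
  exact (pow_eq_pow_mod _ root_pow).symm

theorem leftMulMatrix_cyclicBasis_mk (c : ZMod r → R) :
    Algebra.leftMulMatrix (cyclicBasis R r)
      (AdjoinRoot.mk (X ^ r - 1) (∑ i, C (c i) * X ^ i.val)) = Matrix.circulant c := by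
  have mk_eq_sum : AdjoinRoot.mk (X ^ r - 1) (∑ i : ZMod r, C (c i) * X ^ i.val) =
      ∑ i, c i • cyclicBasis R r i := by
    simp [cyclicBasis_apply, Algebra.smul_def, AdjoinRoot.algebraMap_eq]
  rw [mk_eq_sum, leftMulMatrix_sum_smul_eq_circulant (cyclicBasis_add R r)]

end CyclicBasis

theorem rank_circulant_general {F : Type*} [Field F] [DecidableEq F] (r : ℕ) [NeZero r]
    (c : ZMod r → F) :
    (Matrix.circulant c).rank =
      r - (EuclideanDomain.gcd (∑ i : ZMod r, C (c i) * X ^ i.val) (X ^ r - 1)).natDegree := by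
  have rank_add := rank_leftMulMatrix_add_finrank_quotient (cyclicBasis F r)
    (AdjoinRoot.mk (X ^ r - 1) (∑ i, C (c i) * X ^ i.val))
  rw [leftMulMatrix_cyclicBasis_mk, finrank_adjoinRoot_quotient_span_mk,
    Module.finrank_eq_card_basis (cyclicBasis F r), ZMod.card] at rank_add
  exact Nat.eq_sub_of_add_eq rank_add

/-- The rank of a binary circulant matrix: if `M(X)` is the polynomial associated with
the circulant matrix `M = circulant c`, `K = gcd(M(X), Xʳ − 1)`, and `k = deg K`,
then `rank M = r − k`. -/
theorem rank_circulant (r : ℕ) [NeZero r] (c : ZMod r → ZMod 2) :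
    (Matrix.circulant c).rank =
      r - (EuclideanDomain.gcd
            (∑ i : ZMod r, Polynomial.C (c i) * (X : Polynomial (ZMod 2)) ^ i.val)
            ((X : Polynomial (ZMod 2)) ^ r - 1)).natDegree :=
  rank_circulant_general r c
end

section
/- Let p, q ≥ 1 and r = p * q. Define c : ZMod r → ZMod 2 by c i = 1 if p divides the representative of i in [0, r) and c i = 0 otherwise. Then (Matrix.circulant c).rank = p. -/
/-!
The `(i, j)` entry of the circulant matrix of the indicator of a subgroup `H` is `1` exactly when
`i` and `j` lie in the same right coset of `H`. So the matrix is the identity matrix on the set of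
cosets, with rows and columns repeated, and repetition does not change the rank. The multiples of
`p` form the kernel of the reduction `ZMod r → ZMod p`, a subgroup of index `p`.
-/

theorem rank_submatrix_eq_of_surjective {R m m₀ n n₀ : Type*} [CommSemiring R]
    [StrongRankCondition R] [Fintype n] [Fintype n₀] (A : Matrix m n R)
    {f : m₀ → m} {g : n₀ → n} (hf : f.Surjective) (hg : g.Surjective) :
    (A.submatrix f g).rank = A.rank := by
  obtain ⟨s, hs⟩ := hf.hasRightInverse
  obtain ⟨t, ht⟩ := hg.hasRightInverse
  apply le_antisymm (A.rank_submatrix_le f g)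
  calc A.rank = ((A.submatrix f g).submatrix s t).rank := by
        rw [Matrix.submatrix_submatrix, hs.comp_eq_id, ht.comp_eq_id, Matrix.submatrix_id_id]
    _ ≤ (A.submatrix f g).rank := Matrix.rank_submatrix_le _ s t

theorem circulant_indicator_addSubgroup_eq_submatrix {R G : Type*} [Zero R] [One R] [AddGroup G]
    (H : AddSubgroup G) [DecidableEq (Quotient (QuotientAddGroup.rightRel H))] :
    Matrix.circulant ((H : Set G).indicator (1 : G → R)) =
      (1 : Matrix (Quotient (QuotientAddGroup.rightRel H))
        (Quotient (QuotientAddGroup.rightRel H)) R).submatrix (Quotient.mk _) (Quotient.mk _) := by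
  classical
  ext i j
  have same_coset_iff : (⟦i⟧ : Quotient (QuotientAddGroup.rightRel H)) = ⟦j⟧ ↔ i - j ∈ H := by
    rw [eq_comm, Quotient.eq, QuotientAddGroup.rightRel_apply, sub_eq_add_neg]
  simp only [Matrix.circulant_apply, Set.indicator_apply, SetLike.mem_coe, Pi.one_apply,
    Matrix.submatrix_apply, Matrix.one_apply, same_coset_iff]

theorem rank_circulant_indicator_addSubgroup {R G : Type*} [CommSemiring R]
    [StrongRankCondition R] [AddGroup G] [Fintype G] (H : AddSubgroup G) :
    (Matrix.circulant ((H : Set G).indicator (1 : G → R))).rank = H.index := by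
  classical
  have : Fintype (Quotient (QuotientAddGroup.rightRel H)) := Fintype.ofFinite _
  rw [circulant_indicator_addSubgroup_eq_submatrix,
    rank_submatrix_eq_of_surjective _ Quotient.mk_surjective Quotient.mk_surjective,
    Matrix.rank_one, ← Nat.card_eq_fintype_card, AddSubgroup.index,
    Nat.card_congr (QuotientAddGroup.quotientRightRelEquivQuotientLeftRel H)]

section Reduction

variable {p r : ℕ} (hpr : p ∣ r)

theorem index_ker_zmod_castHom : (ZMod.castHom hpr (ZMod p)).toAddMonoidHom.ker.index = p := by
  rw [AddSubgroup.index_ker, AddMonoidHom.range_eq_top.mpr (ZMod.castHom_surjective hpr),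
    AddSubgroup.card_top, Nat.card_zmod]

theorem mem_ker_zmod_castHom_iff_dvd_val [NeZero r] (i : ZMod r) :
    i ∈ (ZMod.castHom hpr (ZMod p)).toAddMonoidHom.ker ↔ p ∣ i.val := by
  rw [AddMonoidHom.mem_ker, RingHom.toAddMonoidHom_eq_coe, AddMonoidHom.coe_coe,
    ZMod.castHom_apply, ← ZMod.natCast_val, ZMod.natCast_eq_zero_iff]

end Reduction

theorem rank_circulant_multiples_general {R : Type*} [CommSemiring R] [StrongRankCondition R]
    {p r : ℕ} [NeZero r] (hpr : p ∣ r) (c : ZMod r → R)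
    (hc : ∀ i : ZMod r, c i = if p ∣ i.val then 1 else 0) :
    (Matrix.circulant c).rank = p := by
  classical
  let H : AddSubgroup (ZMod r) := (ZMod.castHom hpr (ZMod p)).toAddMonoidHom.ker
  have hcH : c = (H : Set (ZMod r)).indicator 1 := by
    ext i
    simp only [hc, Set.indicator_apply, SetLike.mem_coe, H, mem_ker_zmod_castHom_iff_dvd_val,
      Pi.one_apply]
  rw [hcH, rank_circulant_indicator_addSubgroup, index_ker_zmod_castHom]

/-- Let `r = p·q` and let `c : ZMod r → ZMod 2` be the indicator of the multiples of `p`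
(the first row `c` has a `1` exactly in positions divisible by `p`).  Then the circulant
matrix with first row `c` has rank `p`. -/
theorem rank_circulant_multiples (p q : ℕ) (hp : 1 ≤ p) (hq : 1 ≤ q)
    (r : ℕ) (hr : r = p * q) [NeZero r]
    (c : ZMod r → ZMod 2)
    (hc : ∀ i : ZMod r, c i = if p ∣ i.val then 1 else 0) :
    (Matrix.circulant c).rank = p :=
  rank_circulant_multiples_general ⟨q, hr⟩ c hc
end

section
/- Let p, q ≥ 1 and r = p * q. Define c : ZMod r → ZMod 2 by c i = 1 if the representative of i in [0, r) is strictly less than p, and c i = 0 otherwise. Then (Matrix.circulant c).rank = r − p + 1. -/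
/-!
The circulant matrix sends `v` to its cyclic window sums `v i + v (i - 1) + ⋯ + v (i - p + 1)`.
Subtracting two consecutive windows gives `v i - v (i - p)`, so a vector in the kernel is
`p`-periodic; since `p ∣ r` it is the pullback of a function `u` on `ZMod p` along the reduction
`ZMod r → ZMod p`. Every window of a pullback meets each residue class modulo `p` once, so all its
window sums equal the full sum of `u`. Hence the kernel is isomorphic to the space of functions on
`ZMod p` with sum zero, which has rank `p - 1`, and rank-nullity gives the result.
-/

open Finset Function Matrix

section RankNullity

universe u

theorem finrank_range_add_finrank_ker_of_hasRankNullity {R N : Type*} {M : Type u} [Ring R]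
    [HasRankNullity.{u} R] [StrongRankCondition R] [AddCommGroup M] [Module R M]
    [Module.Finite R M] [AddCommGroup N] [Module R N] (f : M →ₗ[R] N) :
    Module.finrank R f.range + Module.finrank R f.ker = Module.finrank R M := by
  rw [← f.quotKerEquivRange.finrank_eq, Submodule.finrank_quotient_add_finrank]

theorem rank_add_finrank_ker_mulVecLin {R m n : Type*} [CommRing R] [IsDomain R] [Fintype n]
    (A : Matrix m n R) : A.rank + Module.finrank R A.mulVecLin.ker = Fintype.card n := by
  rw [Matrix.rank, finrank_range_add_finrank_ker_of_hasRankNullity,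
    Module.finrank_fintype_fun_eq_card]

end RankNullity

section CoordSum

variable (R ι : Type*) [Fintype ι]

/-- The sum of the coordinates, as a linear functional on `ι → R`; its kernel is the space of
functions with sum zero. -/
def coordSum [Semiring R] : (ι → R) →ₗ[R] R := ∑ i, LinearMap.proj i

variable {R ι} in
theorem coordSum_apply [Semiring R] (u : ι → R) : coordSum R ι u = ∑ i, u i := by
  simp only [coordSum, LinearMap.sum_apply, LinearMap.proj_apply]

theorem coordSum_surjective [Semiring R] [Nonempty ι] : Surjective (coordSum R ι) := by
  classical
  intro a
  obtain ⟨i⟩ := ‹Nonempty ι›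
  exact ⟨Pi.single i a, by rw [coordSum_apply, Fintype.sum_pi_single']⟩

theorem finrank_ker_coordSum_add_one [CommRing R] [IsDomain R] [Nonempty ι] :
    Module.finrank R (coordSum R ι).ker + 1 = Fintype.card ι := by
  rw [← Module.finrank_fintype_fun_eq_card R,
    ← finrank_range_add_finrank_ker_of_hasRankNullity (coordSum R ι),
    LinearMap.range_eq_top.2 (coordSum_surjective R ι), finrank_top, Module.finrank_self, add_comm]

end CoordSum

section WindowSum

variable {A M : Type*}

/-- The sum of `v` over the window `i, i - 1, …, i - p + 1` of length `p`. The window extends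
backwards from `i` because a circulant matrix acts by convolution. -/
def windowSum [AddGroupWithOne A] [AddCommMonoid M] (p : ℕ) (v : A → M) (i : A) : M :=
  ∑ k ∈ range p, v (i - k)

theorem windowSum_add_one_add [AddCommGroupWithOne A] [AddCommMonoid M] (p : ℕ) (v : A → M)
    (i : A) : windowSum p v (i + 1) + v (i + 1 - p) = windowSum p v i + v (i + 1) := by
  have shift : ∀ k : ℕ, i + 1 - ((k + 1 : ℕ) : A) = i - k := fun k => by push_cast; abel
  calc windowSum p v (i + 1) + v (i + 1 - p)
      = ∑ k ∈ range (p + 1), v (i + 1 - k) := (sum_range_succ _ p).symm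
    _ = windowSum p v i + v (i + 1) := by
      simp only [sum_range_succ', shift, Nat.cast_zero, sub_zero, windowSum]

theorem periodic_of_windowSum_eq_const [AddCommGroupWithOne A] [AddCommGroup M] {p : ℕ}
    {v : A → M} {a : M} (h : ∀ i, windowSum p v i = a) : Periodic v (p : A) := by
  intro i
  have key := windowSum_add_one_add p v (i + p - 1)
  rw [h, h, sub_add_cancel, add_sub_cancel_right] at key
  exact (add_left_cancel key).symm

end WindowSum

section ZModReduction

theorem sum_range_natCast_zmod {M : Type*} [AddCommMonoid M] (n : ℕ) [NeZero n] (g : ZMod n → M) :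
    ∑ k ∈ range n, g k = ∑ k, g k :=
  sum_bij' (fun k _ => (k : ZMod n)) (fun a _ => a.val) (fun _ _ => mem_univ _)
    (fun a _ => mem_range.2 a.val_lt) (fun _ hk => ZMod.val_cast_of_lt (mem_range.1 hk))
    (fun a _ => a.natCast_zmod_val) (fun _ _ => rfl)

variable {p r : ℕ} (hpr : p ∣ r)

theorem exists_comp_castHom_eq_of_periodic {α : Type*} {v : ZMod r → α}
    (hv : Periodic v (p : ZMod r)) : ∃ u : ZMod p → α, u ∘ ZMod.castHom hpr (ZMod p) = v := by
  have hfiber : ∀ x y, ZMod.castHom hpr (ZMod p) x = ZMod.castHom hpr (ZMod p) y → v x = v y := by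
    intro x y hxy
    obtain ⟨a, rfl⟩ := ZMod.intCast_surjective x
    obtain ⟨b, rfl⟩ := ZMod.intCast_surjective y
    rw [map_intCast, map_intCast, eq_comm, ZMod.intCast_eq_intCast_iff_dvd_sub] at hxy
    obtain ⟨m, hm⟩ := hxy
    rw [eq_add_of_sub_eq' hm]
    push_cast
    rw [mul_comm]
    exact hv.int_mul m b
  have hsurj := ZMod.castHom_surjective hpr
  exact ⟨v ∘ surjInv hsurj, funext fun x => hfiber _ _ (surjInv_eq hsurj _)⟩

theorem windowSum_comp_castHom {M : Type*} [AddCommMonoid M] [NeZero p] (u : ZMod p → M)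
    (i : ZMod r) : windowSum p (u ∘ ZMod.castHom hpr (ZMod p)) i = ∑ k, u k := by
  simp only [windowSum, Function.comp_apply, map_sub, map_natCast]
  rw [sum_range_natCast_zmod p fun k => u (ZMod.castHom hpr (ZMod p) i - k)]
  exact (Equiv.subLeft _).sum_comp u

end ZModReduction

section Circulant

theorem circulant_mulVec_apply {G R : Type*} [AddCommGroup G] [Fintype G]
    [NonUnitalNonAssocSemiring R] (c v : G → R) (i : G) :
    (circulant c *ᵥ v) i = ∑ k, c k * v (i - k) := by
  simp only [mulVec, dotProduct, circulant_apply]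
  rw [← (Equiv.subLeft i).sum_comp]
  simp only [Equiv.subLeft_apply, sub_sub_cancel]

theorem circulant_mulVec_eq_windowSum {R : Type*} [NonAssocSemiring R] {p r : ℕ} [NeZero r]
    (hpr : p ≤ r) {c : ZMod r → R} (hc : ∀ i, c i = if i.val < p then 1 else 0) (v : ZMod r → R) :
    circulant c *ᵥ v = windowSum p v := by
  ext i
  rw [circulant_mulVec_apply, ← sum_range_natCast_zmod, windowSum]
  symm
  refine sum_subset_zero_on_sdiff (range_subset_range.2 hpr) (fun k hk => ?_) fun k hk => ?_
  · obtain ⟨hkr, hkp⟩ := mem_sdiff.1 hk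
    rw [hc, ZMod.val_cast_of_lt (mem_range.1 hkr), if_neg (mt mem_range.2 hkp), zero_mul]
  · have hkp := mem_range.1 hk
    rw [hc, ZMod.val_cast_of_lt (hkp.trans_le hpr), if_pos hkp, one_mul]

variable {R : Type*} [CommRing R] {p r : ℕ} [NeZero r] (hpr : p ∣ r) {c : ZMod r → R}
  (hc : ∀ i, c i = if i.val < p then 1 else 0)

include hpr hc

theorem circulant_mulVec_comp_castHom [NeZero p] (u : ZMod p → R) :
    circulant c *ᵥ (u ∘ ZMod.castHom hpr (ZMod p)) = const _ (coordSum R (ZMod p) u) := by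
  ext i
  rw [circulant_mulVec_eq_windowSum (Nat.le_of_dvd (NeZero.pos r) hpr) hc,
    windowSum_comp_castHom, const_apply, coordSum_apply]

theorem ker_mulVecLin_circulant [NeZero p] :
    (circulant c).mulVecLin.ker =
      (coordSum R (ZMod p)).ker.map (LinearMap.funLeft R R (ZMod.castHom hpr (ZMod p))) := by
  have hmul := circulant_mulVec_comp_castHom hpr hc
  ext v
  simp only [Submodule.mem_map, LinearMap.mem_ker, mulVecLin_apply]
  constructor
  · intro hv
    have hwindow : windowSum p v = 0 := by
      rw [← circulant_mulVec_eq_windowSum (Nat.le_of_dvd (NeZero.pos r) hpr) hc, hv]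
    obtain ⟨u, rfl⟩ :=
      exists_comp_castHom_eq_of_periodic hpr (periodic_of_windowSum_eq_const (congrFun hwindow))
    rw [hmul] at hv
    exact ⟨u, congrFun hv 0, rfl⟩
  · rintro ⟨u, hu, rfl⟩
    exact (hmul u).trans (by rw [hu]; rfl)

theorem finrank_ker_mulVecLin_circulant_add_one [IsDomain R] :
    Module.finrank R (circulant c).mulVecLin.ker + 1 = p := by
  have : NeZero p := ⟨ne_zero_of_dvd_ne_zero (NeZero.ne r) hpr⟩
  have hinj := LinearMap.funLeft_injective_of_surjective R R _ (ZMod.castHom_surjective hpr)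
  rw [ker_mulVecLin_circulant hpr hc,
    ← (Submodule.equivMapOfInjective _ hinj _).finrank_eq, finrank_ker_coordSum_add_one, ZMod.card]

end Circulant

theorem rank_circulant_initial_segment_general {R : Type*} [CommRing R] [IsDomain R] {p r : ℕ}
    [NeZero r] (hpr : p ∣ r) {c : ZMod r → R} (hc : ∀ i, c i = if i.val < p then 1 else 0) :
    (circulant c).rank = r - p + 1 := by
  have hle : p ≤ r := Nat.le_of_dvd (NeZero.pos r) hpr
  have hker := finrank_ker_mulVecLin_circulant_add_one hpr hc
  have hrank := rank_add_finrank_ker_mulVecLin (circulant c)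
  rw [ZMod.card] at hrank
  omega

/-- Let `r = p·q` and let `c : ZMod r → ZMod 2` be the indicator of `{0, 1, …, p−1}`
(the first row has `1`s exactly in the first `p` positions).  Then the circulant matrix
with first row `c` has rank `r − p + 1`. -/
theorem rank_circulant_initial_segment (p q : ℕ) (hp : 1 ≤ p) (hq : 1 ≤ q)
    (r : ℕ) (hr : r = p * q) [NeZero r]
    (c : ZMod r → ZMod 2)
    (hc : ∀ i : ZMod r, c i = if i.val < p then 1 else 0) :
    (Matrix.circulant c).rank = r - p + 1 :=
  rank_circulant_initial_segment_general ⟨q, hr⟩ hc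
end

section
/- Let H be the Type-I quasi-cyclic parity-check matrix associated to an exponent matrix c : Fin J → Fin L → ZMod r (with r, J, L ≥ 1). Then H * Hᵀ = 0 (equivalently, the row space of H is contained in its null space, i.e. the binary code C(H) is dual-containing) if and only if for all i, j ∈ Fin J, the difference multiset D i j is multiplicity even. -/
/-!
Write `P x` for the circulant permutation matrix of `x`. Then `P x * (P y)ᵀ = P (x - y)`, so the
`(i, j)` block of `H * Hᵀ` is `∑ l, P (c i l - c j l)`. The matrices `P d` have disjoint supports,
hence the coefficient of `P d` in that block is the multiplicity of `d` in the difference multiset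
of the rows `i` and `j`, and the block vanishes modulo 2 exactly when all these multiplicities are
even.
-/

open Matrix

/-- The Type-I quasi-cyclic parity-check matrix associated with an exponent matrix
`c : Fin J → Fin L → ZMod r`: the `(j,l)` block is the circulant permutation matrix
with `1`s at positions `(a,b)` with `a − b = c j l`. -/
def typeIH (r J L : ℕ) (c : Fin J → Fin L → ZMod r) :
    Matrix (Fin J × ZMod r) (Fin L × ZMod r) (ZMod 2) :=
  Matrix.of fun p q => if p.2 - q.2 = c p.1 q.1 then 1 else 0

/-- The difference multiset `D i j = {c i l − c j l | l ∈ Fin L}` of two rows of the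
exponent matrix. -/
def diffMultiset (r J L : ℕ) (c : Fin J → Fin L → ZMod r) (i j : Fin J) :
    Multiset (ZMod r) :=
  (Finset.univ.val : Multiset (Fin L)).map fun l => c i l - c j l

section CirculantLift

variable {m m' n G : Type*} [DecidableEq G] (R : Type*)

/-- The circulant permutation matrix of `x`, with its `1`s at the positions `(a, b)` such that
`a - b = x`. The case `G = ZMod r` is the usual notion. -/
def circulantPerm [Sub G] [Zero R] [One R] (x : G) : Matrix G G R :=
  circulant (Pi.single x 1)

/-- The lift of an exponent matrix `c`, obtained by replacing each entry of `c` with its circulant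
permutation matrix. Rows and columns are indexed by pairs (block, position in the block). -/
def circulantLift [Sub G] [Zero R] [One R] (c : m → n → G) :
    Matrix (m × G) (n × G) R :=
  comp m n G G R (of fun i l => circulantPerm R (c i l))

theorem circulantPerm_mul_transpose [AddGroup G] [Fintype G] [NonAssocSemiring R] (x y : G) :
    circulantPerm R x * (circulantPerm R y)ᵀ = circulantPerm R (x - y) := by
  have single_neg : (fun a => (Pi.single y 1 : G → R) (-a)) = Pi.single (-y) 1 := by
    ext a
    simp only [Pi.single_apply, neg_eq_iff_eq_neg]
  have col_neg : (circulant (Pi.single x 1 : G → R)).col (-y) = Pi.single (x - y) 1 := by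
    ext a
    simp only [col_apply, circulant_apply, Pi.single_apply, sub_neg_eq_add, eq_sub_iff_add_eq]
  simp only [circulantPerm, transpose_circulant, circulant_mul, single_neg, mulVec_single_one,
    col_neg]

theorem sum_circulantPerm_apply [Sub G] [AddCommMonoidWithOne R] [Fintype n] (f : n → G)
    (a b : G) :
    ∑ l, circulantPerm R (f l) a b = ((Finset.univ.val.map f).count (a - b) : R) := by
  simp only [circulantPerm, circulant_apply, Pi.single_apply, Finset.sum_boole,
    Multiset.count_map, Finset.card_def, Finset.filter_val]

theorem circulantLift_mul_transpose_apply [AddGroup G] [Fintype G] [NonAssocSemiring R]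
    [Fintype n] (c : m → n → G) (d : m' → n → G) (i : m) (j : m') (a b : G) :
    (circulantLift R c * (circulantLift R d)ᵀ) (i, a) (j, b) =
      ((Finset.univ.val.map fun l => c i l - d j l).count (a - b) : R) :=
  calc (circulantLift R c * (circulantLift R d)ᵀ) (i, a) (j, b)
    _ = ∑ l, (circulantPerm R (c i l) * (circulantPerm R (d j l))ᵀ) a b := by
      rw [mul_apply, Fintype.sum_prod_type]
      rfl
    _ = ((Finset.univ.val.map fun l => c i l - d j l).count (a - b) : R) := by
      simp only [circulantPerm_mul_transpose, sum_circulantPerm_apply]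

theorem typeI_dual_containing_iff_general [AddGroup G] [Fintype G] [NonAssocSemiring R] (p : ℕ)
    [CharP R p] [Fintype n] (c : m → n → G) (d : m' → n → G) :
    circulantLift R c * (circulantLift R d)ᵀ = 0 ↔
      ∀ i j a, p ∣ (Finset.univ.val.map fun l => c i l - d j l).count a := by
  simp only [← ext_iff, Prod.forall, circulantLift_mul_transpose_apply, Matrix.zero_apply,
    CharP.cast_eq_zero_iff R p]
  constructor
  · intro h i j a
    simpa only [sub_zero] using h i a j 0
  · intro h i a j b
    exact h i j (a - b)

end CirculantLift

theorem typeIH_eq_circulantLift (r J L : ℕ) (c : Fin J → Fin L → ZMod r) :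
    typeIH r J L c = circulantLift (ZMod 2) c := by
  ext ⟨i, a⟩ ⟨l, b⟩
  simp only [typeIH, circulantLift, circulantPerm, comp_apply, of_apply, circulant_apply,
    Pi.single_apply]

/-- A Type-I QC-LDPC code is dual-containing (`H Hᵀ = 0`) iff every difference multiset
`D i j` of rows of the exponent matrix is multiplicity even. -/
theorem typeI_dual_containing_iff (r J L : ℕ) [NeZero r] (hJ : 1 ≤ J) (hL : 1 ≤ L)
    (c : Fin J → Fin L → ZMod r) :
    typeIH r J L c * (typeIH r J L c)ᵀ = 0 ↔
      ∀ i j : Fin J, ∀ a : ZMod r,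
        Even (Multiset.count a (diffMultiset r J L c i j)) := by
  simp only [typeIH_eq_circulantLift, even_iff_two_dvd]
  exact typeI_dual_containing_iff_general (ZMod 2) 2 c c
end

section
/- Let H be the Type-I quasi-cyclic parity-check matrix associated to an exponent matrix c : Fin J → Fin L → ZMod r (with r, J, L ≥ 1). Then H contains no 4-cycle (equivalently, the code has girth at least 6) if and only if for all i ≠ j in Fin J, the difference multiset D i j is multiplicity free. -/
/-!
Rows `(i, a)` and `(j, b)` of `H` have a common `1` in block column `l` exactly when
`c i l - c j l = a - b`. Two block columns `l ≠ m` can therefore complete a 4-cycle, for suitable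
offsets `a` and `b`, exactly when `c i l - c j l = c i m - c j m`, a repetition in `D i j`. Since
every block is a permutation matrix, a 4-cycle cannot stay within one block row or one block
column, so these are the only 4-cycles.
-/

open Matrix

/-- A 4-cycle in a binary matrix: two distinct rows and two distinct columns whose four
intersections all hold a `1`. -/
def HasFourCycle {R C : Type*} (H : Matrix R C (ZMod 2)) : Prop :=
  ∃ (ρ ρ' : R) (γ γ' : C), ρ ≠ ρ' ∧ γ ≠ γ' ∧
    H ρ γ = 1 ∧ H ρ γ' = 1 ∧ H ρ' γ = 1 ∧ H ρ' γ' = 1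

section

variable {r J L : ℕ} {c : Fin J → Fin L → ZMod r} {i j : Fin J} {l : Fin L} {a b x y : ZMod r}

theorem typeIH_eq_one_iff : typeIH r J L c (i, a) (l, x) = 1 ↔ a - x = c i l := by
  simp [typeIH]

theorem row_eq_of_typeIH_eq_one (ha : typeIH r J L c (i, a) (l, x) = 1)
    (hb : typeIH r J L c (i, b) (l, x) = 1) : a = b :=
  sub_left_injective ((typeIH_eq_one_iff.1 ha).trans (typeIH_eq_one_iff.1 hb).symm)

theorem col_eq_of_typeIH_eq_one (hx : typeIH r J L c (i, a) (l, x) = 1)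
    (hy : typeIH r J L c (i, a) (l, y) = 1) : x = y :=
  sub_right_injective ((typeIH_eq_one_iff.1 hx).trans (typeIH_eq_one_iff.1 hy).symm)

theorem exists_common_col_typeIH_iff :
    (∃ x, typeIH r J L c (i, a) (l, x) = 1 ∧ typeIH r J L c (j, b) (l, x) = 1) ↔
      c i l - c j l = a - b := by
  simp only [typeIH_eq_one_iff]
  constructor
  · rintro ⟨x, ha, hb⟩
    rw [← ha, ← hb, sub_sub_sub_cancel_right]
  · intro h
    refine ⟨a - c i l, sub_sub_cancel a (c i l), ?_⟩
    linear_combination h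

theorem hasFourCycle_typeIH_iff :
    HasFourCycle (typeIH r J L c) ↔
      ∃ i j, i ≠ j ∧ ¬ Function.Injective fun l => c i l - c j l := by
  constructor
  · rintro ⟨⟨i, a⟩, ⟨j, b⟩, ⟨l, x⟩, ⟨m, y⟩, hrow, hcol, hax, hay, hbx, hby⟩
    have hij : i ≠ j := by
      rintro rfl
      exact hrow (congrArg (i, ·) (row_eq_of_typeIH_eq_one hax hbx))
    have hlm : l ≠ m := by
      rintro rfl
      exact hcol (congrArg (l, ·) (col_eq_of_typeIH_eq_one hax hay))
    have hl : c i l - c j l = a - b := exists_common_col_typeIH_iff.1 ⟨x, hax, hbx⟩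
    have hm : c i m - c j m = a - b := exists_common_col_typeIH_iff.1 ⟨y, hay, hby⟩
    exact ⟨i, j, hij, fun hinj => hlm (hinj (hl.trans hm.symm))⟩
  · rintro ⟨i, j, hij, hinj⟩
    obtain ⟨l, m, heq, hlm⟩ := Function.not_injective_iff.1 hinj
    obtain ⟨x, hix, hjx⟩ := exists_common_col_typeIH_iff.2 (sub_zero (c i l - c j l)).symm
    obtain ⟨y, hiy, hjy⟩ := exists_common_col_typeIH_iff.2 (heq.symm.trans (sub_zero _).symm)
    exact ⟨(i, c i l - c j l), (j, 0), (l, x), (m, y), fun h => hij (congrArg Prod.fst h),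
      fun h => hlm (congrArg Prod.fst h), hix, hiy, hjx, hjy⟩

theorem nodup_diffMultiset_iff :
    (diffMultiset r J L c i j).Nodup ↔ Function.Injective fun l => c i l - c j l :=
  Fintype.nodup_map_univ_iff_injective

end

/-- A Type-I QC-LDPC code has girth at least 6 (no 4-cycles) iff every difference
multiset `D i j` for `i ≠ j` is multiplicity free. -/
theorem typeI_girth_six_iff (r J L : ℕ) [NeZero r] (hJ : 1 ≤ J) (hL : 1 ≤ L)
    (c : Fin J → Fin L → ZMod r) :
    ¬ HasFourCycle (typeIH r J L c) ↔
      ∀ i j : Fin J, i ≠ j → ∀ a : ZMod r,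
        Multiset.count a (diffMultiset r J L c i j) ≤ 1 := by
  simp only [hasFourCycle_typeIH_iff, not_exists, not_and, not_not,
    ← Multiset.nodup_iff_count_le_one, nodup_diffMultiset_iff]
end

section
/- Let H be the Type-II quasi-cyclic parity-check matrix associated to support data E : Fin J → Fin L → Finset (ZMod r) with (E j l).card ≤ 2 for all j, l (with r, J, L ≥ 1). Then H * Hᵀ = 0 (equivalently, the row space of H is contained in its null space, i.e. the binary code C(H) is dual-containing) if and only if for all i, j ∈ Fin J, the difference multiset D i j is multiplicity even. -/
/-! The `((i, a), (j, b))` entry of `H Hᵀ` counts, in the coefficient ring, the columns `(l, c)`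
with `a - c ∈ E i l` and `b - c ∈ E j l`. For fixed `l`, the map `c ↦ (a - c, b - c)` is a
bijection from these `c` onto the pairs `(s, t) ∈ E i l × E j l` with `s - t = a - b`. Hence each
block of `H Hᵀ` is again circulant, generated by the multiplicity function of `D i j`, and a
circulant matrix vanishes exactly when its generating function does. -/

open Matrix

/-- The Type-II quasi-cyclic parity-check matrix associated with support data
`E : Fin J → Fin L → Finset (ZMod r)`: the `(j,l)` block is the circulant matrix with
`1`s at positions `(a,b)` with `a − b ∈ E j l` (a zero, monomial, or binomial circulant
when `|E j l| ≤ 2`). -/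
def typeIIH (r J L : ℕ) (E : Fin J → Fin L → Finset (ZMod r)) :
    Matrix (Fin J × ZMod r) (Fin L × ZMod r) (ZMod 2) :=
  Matrix.of fun p q => if p.2 - q.2 ∈ E p.1 q.1 then 1 else 0

/-- The Type-II difference multiset `D i j`: the multiset sum over `l` of all
differences `s − t` with `s ∈ E i l` and `t ∈ E j l`. -/
def diffMultisetII (r J L : ℕ) (E : Fin J → Fin L → Finset (ZMod r)) (i j : Fin J) :
    Multiset (ZMod r) :=
  (Finset.univ.val : Multiset (Fin L)).bind fun l =>
    (Finset.product (E i l) (E j l)).val.map fun st => st.1 - st.2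

section BlockCirculant

variable {R G ι κ : Type*} [AddGroup G] [DecidableEq G]

/-- The multiset of differences `s - t`, for `s ∈ S` and `t ∈ T`. -/
def differences (S T : Finset G) : Multiset G :=
  (S ×ˢ T).val.map fun st => st.1 - st.2

/-- The difference multiset of the block rows `i` and `j`: `D i j` for supports in an arbitrary
additive group. -/
def blockDifferences [Fintype κ] (E : ι → κ → Finset G) (i j : ι) : Multiset G :=
  (Finset.univ : Finset κ).val.bind fun l => differences (E i l) (E j l)

variable (R) in
/-- The circulant matrix with a `1` at `(a, b)` when `a - b ∈ S` and a `0` otherwise. -/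
def indicatorCirculant [Zero R] [One R] (S : Finset G) : Matrix G G R :=
  circulant fun d => if d ∈ S then 1 else 0

variable (R) in
/-- The matrix whose `(j, l)` block is the indicator circulant of `E j l`: the parity-check matrix
of a quasi-cyclic code, with the cyclic group replaced by an additive group `G` and the
coefficients `ZMod 2` by `R`. -/
def blockCirculant [Zero R] [One R] (E : ι → κ → Finset G) : Matrix (ι × G) (κ × G) R :=
  comp ι κ G G R (of fun j l => indicatorCirculant R (E j l))

theorem matrix_comp_mul_comp {I J K L M N : Type*} [Fintype J] [Fintype M]
    [NonUnitalNonAssocSemiring R] (A : Matrix I J (Matrix L M R))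
    (B : Matrix J K (Matrix M N R)) :
    comp I J L M R A * comp J K M N R B =
      comp I K L N R (of fun i k => ∑ j, A i j * B j k) := by
  ext ⟨i, a⟩ ⟨k, b⟩
  simp only [mul_apply, comp_apply, of_apply, Fintype.sum_prod_type, Matrix.sum_apply]

theorem count_blockDifferences [Fintype κ] (E : ι → κ → Finset G) (i j : ι) (d : G) :
    (blockDifferences E i j).count d = ∑ l, (differences (E i l) (E j l)).count d :=
  Multiset.count_bind

variable [Fintype G]

theorem card_filter_sub_mem_eq_count_differences (S T : Finset G) (a b : G) :
    (Finset.univ.filter fun c => a - c ∈ S ∧ b - c ∈ T).card = (differences S T).count (a - b) := by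
  rw [differences, Multiset.count_map, ← Finset.filter_val, Finset.card_val]
  refine Finset.card_nbij (fun c => (a - c, b - c)) ?mapsTo ?injOn ?surjOn
  case mapsTo =>
    intro c hc
    simpa using hc
  case injOn =>
    exact fun c _ d _ h => sub_right_injective (congrArg Prod.fst h)
  case surjOn =>
    rintro ⟨s, t⟩ hst
    obtain ⟨⟨hs, ht⟩, hd⟩ : (s ∈ S ∧ t ∈ T) ∧ a - b = s - t := by simpa using hst
    have ha : a - (-s + a) = s := by simp [sub_eq_add_neg]
    have hb : b - (-s + a) = t := calc
      b - (-s + a) = -(a - b) + s := by simp only [sub_eq_add_neg, neg_add_rev, neg_neg, add_assoc]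
      _ = t := by rw [hd, neg_sub, sub_add_cancel]
    exact ⟨-s + a, by simp [ha, hb, hs, ht], by simp [ha, hb]⟩

theorem indicatorCirculant_mul_transpose [NonAssocSemiring R] (S T : Finset G) :
    indicatorCirculant R S * (indicatorCirculant R T)ᵀ =
      circulant fun d => ((differences S T).count d : R) := by
  ext a b
  simp only [indicatorCirculant, mul_apply, transpose_apply, circulant_apply, mul_ite, mul_one,
    mul_zero, ← ite_and, Finset.sum_boole, ← card_filter_sub_mem_eq_count_differences, and_comm]

theorem blockCirculant_mul_transpose [Fintype κ] [NonAssocSemiring R] (E : ι → κ → Finset G) :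
    blockCirculant R E * (blockCirculant R E)ᵀ =
      comp ι ι G G R (of fun i j => circulant fun d => ((blockDifferences E i j).count d : R)) := by
  rw [blockCirculant, transpose_comp, matrix_comp_mul_comp]
  congr 2 with i j a b
  simp only [map_apply, transpose_apply, of_apply, indicatorCirculant_mul_transpose,
    Matrix.sum_apply, circulant_apply, count_blockDifferences, Nat.cast_sum]

theorem typeII_dual_containing_iff_general [Fintype κ] [NonAssocSemiring R] (p : ℕ) [CharP R p]
    (E : ι → κ → Finset G) :
    blockCirculant R E * (blockCirculant R E)ᵀ = 0 ↔
      ∀ i j : ι, ∀ a : G, p ∣ (blockDifferences E i j).count a := by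
  calc blockCirculant R E * (blockCirculant R E)ᵀ = 0
    _ ↔ of (fun i j => circulant fun a => ((blockDifferences E i j).count a : R)) = 0 := by
        rw [blockCirculant_mul_transpose]
        exact (compAddEquiv ι ι G G R).map_eq_zero_iff
    _ ↔ ∀ i j, circulant (fun a => ((blockDifferences E i j).count a : R)) = 0 :=
        Matrix.ext_iff.symm
    _ ↔ ∀ i j, (fun a => ((blockDifferences E i j).count a : R)) = 0 := by
        simp only [← circulant_zero R G, circulant_inj]
    _ ↔ ∀ i j a, p ∣ (blockDifferences E i j).count a := by
        simp only [funext_iff, Pi.zero_apply, CharP.cast_eq_zero_iff R p]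

end BlockCirculant

theorem typeIIH_eq_blockCirculant (r J L : ℕ) (E : Fin J → Fin L → Finset (ZMod r)) :
    typeIIH r J L E = blockCirculant (ZMod 2) E :=
  rfl

theorem diffMultisetII_eq_blockDifferences (r J L : ℕ) (E : Fin J → Fin L → Finset (ZMod r)) :
    diffMultisetII r J L E = blockDifferences E :=
  rfl

/-- A Type-II QC-LDPC code is dual-containing (`H Hᵀ = 0`) iff every difference
multiset `D i j` is multiplicity even. -/
theorem typeII_dual_containing_iff (r J L : ℕ) [NeZero r] (hJ : 1 ≤ J) (hL : 1 ≤ L)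
    (E : Fin J → Fin L → Finset (ZMod r)) (hE : ∀ j l, (E j l).card ≤ 2) :
    typeIIH r J L E * (typeIIH r J L E)ᵀ = 0 ↔
      ∀ i j : Fin J, ∀ a : ZMod r,
        Even (Multiset.count a (diffMultisetII r J L E i j)) := by
  simp only [typeIIH_eq_blockCirculant, diffMultisetII_eq_blockDifferences, even_iff_two_dvd]
  exact typeII_dual_containing_iff_general 2 E
end

section
/- Let H be the Type-II quasi-cyclic parity-check matrix associated to support data E : Fin J → Fin L → Finset (ZMod r) with (E j l).card ≤ 2 for all j, l (with r, J, L ≥ 1). Then H contains no 4-cycle (girth at least 6) if and only if: for all i ≠ j in Fin J the difference multiset D i j is multiplicity free, and for every i ∈ Fin J every nonzero element of ZMod r occurs at most once in D i i. -/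
/-!
Rows `(i, x)` and `(j, y)` of `H` share the column `(l, b)` exactly when `s = x - b` lies in
`E i l` and `t = y - b` lies in `E j l`, and then `s - t = x - y`. Conversely, a representation
`x - y = s - t` with `s ∈ E i l` and `t ∈ E j l` determines the column `(l, x - s)`. So the number
of common columns is the multiplicity of `x - y` in `D i j`, and there is a 4-cycle exactly when
this number is at least two for some pair of distinct rows. For `i = j` the rows are distinct
exactly when `x - y ≠ 0`, which is why `0` is exempt on the diagonal.
-/

open Matrix

/-- The columns in which the rows `ρ` and `ρ'` of a binary matrix both hold a `1`, that is, the
common neighbours of two check nodes in the Tanner graph. A set rather than a finset, so that no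
finiteness of the column type is needed. -/
def commonColumns {R C : Type*} (H : Matrix R C (ZMod 2)) (ρ ρ' : R) : Set C :=
  {γ | H ρ γ = 1 ∧ H ρ' γ = 1}

theorem not_hasFourCycle_iff_encard_commonColumns_le_one {R C : Type*} {H : Matrix R C (ZMod 2)} :
    ¬ HasFourCycle H ↔ Pairwise fun ρ ρ' => (commonColumns H ρ ρ').encard ≤ 1 := by
  simp only [Set.encard_le_one_iff]
  constructor
  · intro h ρ ρ' hρ γ γ' hγ hγ'
    by_contra hne
    exact h ⟨ρ, ρ', γ, γ', hρ, hne, hγ.1, hγ'.1, hγ.2, hγ'.2⟩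
  · rintro h ⟨ρ, ρ', γ, γ', hρ, hne, h₁, h₂, h₃, h₄⟩
    exact hne (h hρ γ γ' ⟨h₁, h₃⟩ ⟨h₂, h₄⟩)

theorem count_bind_map_eq_card_filter_sigma {ι β : Type*} {α : ι → Type*} [DecidableEq β]
    (s : Finset ι) (t : ∀ i, Finset (α i)) (f : ∀ i, α i → β) (b : β) :
    (s.val.bind fun i => (t i).val.map (f i)).count b =
      ((s.sigma t).filter fun p => b = f p.1 p.2).card := by
  have hmap : (s.val.bind fun i => (t i).val.map (f i)) =
      (s.sigma t).val.map fun p => f p.1 p.2 := by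
    simp only [Finset.sigma, Multiset.sigma, Multiset.map_bind, Multiset.map_map,
      Function.comp_apply]
  rw [hmap, Multiset.count_map, ← Finset.filter_val, Finset.card_val]

section TypeII

variable {r J L : ℕ} (E : Fin J → Fin L → Finset (ZMod r))

variable {E} in
theorem mem_commonColumns_typeIIH {i j : Fin J} {x y : ZMod r} {l : Fin L} {b : ZMod r} :
    (l, b) ∈ commonColumns (typeIIH r J L E) (i, x) (j, y) ↔ x - b ∈ E i l ∧ y - b ∈ E j l := by
  simp [commonColumns, typeIIH]

theorem count_diffMultisetII (i j : Fin J) (a : ZMod r) :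
    (diffMultisetII r J L E i j).count a =
      ((Finset.univ.sigma fun l => E i l ×ˢ E j l).filter fun p => a = p.2.1 - p.2.2).card :=
  count_bind_map_eq_card_filter_sigma Finset.univ (fun l => E i l ×ˢ E j l)
    (fun _ p => p.1 - p.2) a

theorem encard_commonColumns_typeIIH (i j : Fin J) (x y : ZMod r) :
    (commonColumns (typeIIH r J L E) (i, x) (j, y)).encard =
      (diffMultisetII r J L E i j).count (x - y) := by
  let toDiff : Fin L × ZMod r → Σ _ : Fin L, ZMod r × ZMod r := fun γ =>
    ⟨γ.1, x - γ.2, y - γ.2⟩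
  have toDiff_injective : Function.Injective toDiff := by
    rintro ⟨l, b⟩ ⟨l', b'⟩ h
    simp_all [toDiff]
  have image_toDiff : toDiff '' commonColumns (typeIIH r J L E) (i, x) (j, y) =
      ((Finset.univ.sigma fun l => E i l ×ˢ E j l).filter fun p => x - y = p.2.1 - p.2.2) := by
    ext ⟨l, s, t⟩
    simp only [Set.mem_image, Finset.coe_filter, Set.mem_ofPred_eq, Finset.mem_sigma,
      Finset.mem_univ, true_and, Finset.mem_product]
    constructor
    · rintro ⟨⟨l, b⟩, hb, ⟨⟩⟩
      exact ⟨mem_commonColumns_typeIIH.mp hb, by ring⟩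
    · rintro ⟨⟨hs, ht⟩, hst⟩
      have hxs : x - (x - s) = s := by ring
      have hyt : y - (x - s) = t := by linear_combination -hst
      refine ⟨(l, x - s), mem_commonColumns_typeIIH.mpr ?_, ?_⟩
      · exact ⟨hxs.symm ▸ hs, hyt.symm ▸ ht⟩
      · simp only [toDiff, hxs, hyt]
  rw [← toDiff_injective.encard_image, image_toDiff, Set.encard_coe_eq_coe_finsetCard,
    count_diffMultisetII]

theorem not_hasFourCycle_typeIIH_iff_count_sub_le_one :
    ¬ HasFourCycle (typeIIH r J L E) ↔ ∀ (i j : Fin J) (x y : ZMod r),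
      (i, x) ≠ (j, y) → (diffMultisetII r J L E i j).count (x - y) ≤ 1 := by
  rw [not_hasFourCycle_iff_encard_commonColumns_le_one]
  simp only [Pairwise, Prod.forall, encard_commonColumns_typeIIH, Nat.cast_le_one]
  exact forall_congr' fun i => forall_comm

theorem typeII_girth_six_iff_general :
    ¬ HasFourCycle (typeIIH r J L E) ↔
      ((∀ i j : Fin J, i ≠ j → ∀ a : ZMod r,
          Multiset.count a (diffMultisetII r J L E i j) ≤ 1) ∧
        (∀ i : Fin J, ∀ a : ZMod r, a ≠ 0 →
          Multiset.count a (diffMultisetII r J L E i i) ≤ 1)) := by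
  rw [not_hasFourCycle_typeIIH_iff_count_sub_le_one]
  constructor
  · intro h
    constructor
    · intro i j hij a
      simpa using h i j a 0 (by simp [hij])
    · intro i a ha
      simpa using h i i a 0 (by simp [ha])
  · rintro ⟨hoff, hdiag⟩ i j x y hne
    obtain rfl | hij := eq_or_ne i j
    · exact hdiag i (x - y) (sub_ne_zero.mpr fun hxy => hne (by rw [hxy]))
    · exact hoff i j hij (x - y)

end TypeII

/-- A Type-II QC-LDPC code has girth at least 6 (no 4-cycles) iff the difference
multisets `D i j` are multiplicity free for `i ≠ j`, and for each `i` every nonzero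
element occurs at most once in `D i i`. -/
theorem typeII_girth_six_iff (r J L : ℕ) [NeZero r] (hJ : 1 ≤ J) (hL : 1 ≤ L)
    (E : Fin J → Fin L → Finset (ZMod r)) (hE : ∀ j l, (E j l).card ≤ 2) :
    ¬ HasFourCycle (typeIIH r J L E) ↔
      ((∀ i j : Fin J, i ≠ j → ∀ a : ZMod r,
          Multiset.count a (diffMultisetII r J L E i j) ≤ 1) ∧
        (∀ i : Fin J, ∀ a : ZMod r, a ≠ 0 →
          Multiset.count a (diffMultisetII r J L E i i) ≤ 1)) :=
  typeII_girth_six_iff_general E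
end

section
/- Let H be the Type-II quasi-cyclic parity-check matrix associated to support data E : Fin J → Fin L → Finset (ZMod r) with (E j l).card ≤ 2 for all j, l (with r, J, L ≥ 1), and suppose every column of H contains at least 2 nonzero entries (column weight at least 2, as in a (J,L)-regular code with J ≥ 2). Then it is impossible that both H * Hᵀ = 0 (H is dual-containing) and H contains no 4-cycle. In other words, there is no dual-containing QC-LDPC code with girth at least 6. -/
/-! A column of weight at least two is shared by two distinct rows. If `H Hᵀ = 0`, the inner
product of these rows vanishes over `ZMod 2`, so they share an even number of columns, hence a
second one; the two rows and two columns form a 4-cycle. -/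

open Matrix

theorem exists_ne_mul_ne_zero_of_dotProduct_eq_zero {ι α : Type*} [Fintype ι]
    [NonUnitalNonAssocSemiring α] {v w : ι → α} (hvw : v ⬝ᵥ w = 0) {i : ι}
    (hi : v i * w i ≠ 0) : ∃ j ≠ i, v j * w j ≠ 0 := by
  by_contra! hzero
  have hsingle : v ⬝ᵥ w = v i * w i := Fintype.sum_eq_single i hzero
  exact hi (hsingle.symm.trans hvw)

theorem hasFourCycle_of_dotProduct_eq_zero {R C : Type*} [Fintype C]
    {H : Matrix R C (ZMod 2)} {ρ ρ' : R} (hne : ρ ≠ ρ') (horth : H ρ ⬝ᵥ H ρ' = 0) {γ : C}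
    (hρ : H ρ γ = 1) (hρ' : H ρ' γ = 1) : HasFourCycle H := by
  have hγ : H ρ γ * H ρ' γ ≠ 0 := by simp [hρ, hρ']
  obtain ⟨γ', hγ', hmul⟩ := exists_ne_mul_ne_zero_of_dotProduct_eq_zero horth hγ
  exact ⟨ρ, ρ', γ, γ', hne, hγ'.symm, hρ, Fin.eq_one_of_ne_zero _ (left_ne_zero_of_mul hmul),
    hρ', Fin.eq_one_of_ne_zero _ (right_ne_zero_of_mul hmul)⟩

theorem typeII_no_dual_containing_girth_six_general {R C : Type*} [Fintype C]
    {H : Matrix R C (ZMod 2)} {γ : C} (hγ : {ρ | H ρ γ = 1}.Nontrivial) :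
    ¬ (H * Hᵀ = 0 ∧ ¬ HasFourCycle H) := by
  rintro ⟨hdual, hfree⟩
  obtain ⟨ρ, hρ, ρ', hρ', hne⟩ := hγ
  have horth : H ρ ⬝ᵥ H ρ' = 0 := congrFun₂ hdual ρ ρ'
  exact hfree (hasFourCycle_of_dotProduct_eq_zero hne horth hρ hρ')

/-- There is no dual-containing QC-LDPC code with girth at least 6: a Type-II
quasi-cyclic parity-check matrix in which every column has weight at least 2 cannot
satisfy `H Hᵀ = 0` and be free of 4-cycles at the same time. -/
theorem typeII_no_dual_containing_girth_six (r J L : ℕ) [NeZero r]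
    (hJ : 1 ≤ J) (hL : 1 ≤ L)
    (E : Fin J → Fin L → Finset (ZMod r)) (hE : ∀ j l, (E j l).card ≤ 2)
    (hcol : ∀ γ : Fin L × ZMod r,
      2 ≤ (Finset.univ.filter fun ρ : Fin J × ZMod r => typeIIH r J L E ρ γ = 1).card) :
    ¬ (typeIIH r J L E * (typeIIH r J L E)ᵀ = 0 ∧
        ¬ HasFourCycle (typeIIH r J L E)) := by
  have hγ := Finset.one_lt_card_iff_nontrivial.mp (hcol (⟨0, hL⟩, 0))
  exact typeII_no_dual_containing_girth_six_general (by simpa [Finset.Nontrivial] using hγ)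
end
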